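/- arXiv:2211.00308 — 2 statements merged into one kernel-verified Lean document; each statement's English description precedes it below -/
import Mathlib

section
/- Let γ > 0, 1 < α < 2, p > 1, a > 0, b > 0, and let f be locally integrable on [0,∞). Suppose w ∈ C¹([0,∞)), w ≢ 0, the function t ↦ ₀I_t^{2−α}(w(s) − w'(0)s − w(0)) is in AC²([0,T]) for every T > 0, and for almost every t ≥ 0 one has (₀D_t^α w)(t) + a·w(t) = (₀I_t^γ f)(t) and f(t) ≥ b·|w(t)|^p. Assume 0 < γ < α/2, α + γ ≤ 2, and w'(0) > 0. Then for every β satisfying α/2 ≤ γ + β < 1 and 0 < β < α, one has liminf_{t→+∞} t^{α−β−1}·(₀I_t^β w)(t) > 0. -/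
/-!
Write `k_σ(t) = t^{σ-1} / Γ(σ)` and `*` for convolution on `(0, ∞)`, so that `₀I_t^σ u = k_σ * u`.
The Mittag-Leffler kernels `r_μ(t) = t^{μ-1} E_{α,μ}(-a t^α)` satisfy `r_σ * k_τ = r_{σ+τ}` and
`r_μ + a r_{μ+α} = k_μ`. Integrated twice, the equation reads
`k_{2-α} * (w - w'(0) s - w(0)) = k_2 * (k_γ * f - a w)`, because the left-hand side vanishes to
first order at `0`. Convolving with `r_{α+β-1}` gives (after one differentiation)
`₀I_t^β w = w'(0) r_{2+β} + w(0) r_{1+β} + r_{α+β+γ} * f` (`representation`, `lower_bound`).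

Since `f ≥ 0` and `r_{α+β+γ} ≥ 0`, the last term can be dropped, and
`t^{α-β-1} (w'(0) r_{2+β}(t) + w(0) r_{1+β}(t))` tends to `w'(0) / (a Γ(2+β-α)) > 0`
(`tendsto_free`).

This uses two facts on `E_{α,μ}(-x)` for `x > 0` and `1 < α < 2`: it is nonnegative for
`μ ≥ 3α/2` (`FF_nonneg`, applicable because `β + γ ≥ α/2`), and it is `O(1/x)` for every real `μ`
(`FF_decay`). By the functional equation `E_{α,μ}(-x) + x E_{α,μ+α}(-x) = 1/Γ(μ)` the first follows
from `|E_{α,μ}(-x)| ≤ 1/Γ(μ)` for `μ ≥ α/2` (`abs_FF_le`), the second from boundedness for all `μ`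
(`FF_bounded`).

The bound `1/Γ(μ)` is proved by discretization. In the Laplace variable `s`, the claim for `μ = α/2`
concerns `s^{α/2} / (s^α + a)`, half the sum of `1 / (s^{α/2} ± i√a)`. With `s` replaced by `1 - q`
and `ν = α/2 ≤ 1`, the power series `1 - (1-q)^ν` has nonnegative coefficients, and this makes the
coefficients of `1 / ((1-q)^ν ± iδ)` dominated by those of `(1-q)^{-ν}` (`dom_resolvent`, `exists_H`).
The coefficients of `(1-q)^{-s}`, suitably scaled, tend to `1/Γ(s)` by Euler's product, and the bound
passes to the limit. The same argument bounds the Prabhakar functions `E^{(i)}_{α,μ}(-x)` for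
`μ ≥ iα/2`; a recursion in `(i, μ)` then yields boundedness of `E_{α,μ}(-x)` for all real `μ`, the
gap `α < 2` being what makes the recursion terminate.
-/

open MeasureTheory Filter

/-- Riemann–Liouville fractional integral of order `σ` based at `0`:
`(₀I_t^σ f)(t) = (1/Γ(σ)) ∫₀ᵗ (t−s)^{σ−1} f(s) ds`. -/
noncomputable def rlInt (σ : ℝ) (f : ℝ → ℝ) (t : ℝ) : ℝ :=
  (1 / Real.Gamma σ) * ∫ s in (0:ℝ)..t, (t - s) ^ (σ - 1) * f s

/-- The function whose second derivative is the (left) Caputo derivative of order `α ∈ (1,2]`: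
for `α < 2` it is `₀I_t^{2−α}(w(s) − w'(0)·s − w(0))`, and for `α = 2` it is `w` itself. -/
noncomputable def capKernel (α : ℝ) (w : ℝ → ℝ) : ℝ → ℝ :=
  if α = 2 then w else rlInt (2 - α) (fun s => w s - deriv w 0 * s - w 0)

/-- Left Caputo fractional derivative of order `α ∈ (1,2]`:
`(₀D_t^α w)(t) = (d²/dt²)[ ₀I_t^{2−α}(w(s) − w'(0)s − w(0)) ](t)` (second derivative of `w` when `α = 2`). -/
noncomputable def caputoD (α : ℝ) (w : ℝ → ℝ) : ℝ → ℝ :=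
  deriv (deriv (capKernel α w))

/-- `g ∈ AC²([0,T])`: `g` is differentiable on `[0,T]`, its second derivative is integrable,
and `g'` is the integral of `g''` (i.e. `g'` is absolutely continuous). -/
def AC2On (g : ℝ → ℝ) (T : ℝ) : Prop :=
  (∀ t ∈ Set.Icc (0:ℝ) T, DifferentiableAt ℝ g t) ∧
  IntervalIntegrable (deriv (deriv g)) volume 0 T ∧
  ∀ t ∈ Set.Icc (0:ℝ) T, deriv g t = deriv g 0 + ∫ s in (0:ℝ)..t, deriv (deriv g) s

/-! ### Power series domination -/

/-- The coefficient `s(s+1)⋯(s+n-1) / n!` of `q^n` in `(1 - q)^{-s}`. -/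
noncomputable def cc (s : ℝ) (n : ℕ) : ℝ := (∏ j ∈ Finset.range n, (s + j)) / n.factorial

/-- The formal power series `(1 - q)^{-s}`. -/
noncomputable def BB (s : ℝ) : PowerSeries ℝ := PowerSeries.mk (cc s)

lemma cc_zero (s : ℝ) : cc s 0 = 1 := by simp [cc]

lemma cc_nonneg {s : ℝ} (hs : 0 ≤ s) (n : ℕ) : 0 ≤ cc s n := by
  unfold cc
  exact div_nonneg (Finset.prod_nonneg fun j _ => by positivity) (by positivity)

lemma cc_pos {s : ℝ} (hs : 0 < s) (n : ℕ) : 0 < cc s n := by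
  unfold cc
  exact div_pos (Finset.prod_pos fun j _ => by positivity) (by positivity)

lemma cc_neg_nonpos {s : ℝ} (hs : 0 ≤ s) (hs1 : s ≤ 1) (n : ℕ) : cc (-s) (n + 1) ≤ 0 := by
  unfold cc
  rw [Finset.prod_range_succ']
  refine div_nonpos_of_nonpos_of_nonneg (mul_nonpos_of_nonneg_of_nonpos ?_ (by simpa)) (by positivity)
  refine Finset.prod_nonneg fun j _ => ?_
  push_cast
  have : (0:ℝ) ≤ j := by positivity
  linarith

lemma eval_ascPochhammer_eq_prod (s : ℝ) (n : ℕ) :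
    (ascPochhammer ℝ n).eval s = ∏ j ∈ Finset.range n, (s + j) := by
  induction n with
  | zero => simp
  | succ n ih => rw [ascPochhammer_succ_eval, Finset.prod_range_succ, ih]

lemma BB_eq (s : ℝ) :
    BB s = PowerSeries.rescale (-1 : ℝ) (PowerSeries.binomialSeries ℝ (-s)) := by
  ext n
  rw [BB, PowerSeries.coeff_mk, PowerSeries.coeff_rescale, PowerSeries.binomialSeries_coeff,
    Ring.choose_neg']
  have h := Ring.factorial_nsmul_multichoose_eq_ascPochhammer s n
  rw [Polynomial.ascPochhammer_smeval_eq_eval, eval_ascPochhammer_eq_prod,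
    nsmul_eq_mul] at h
  have hn : (n.factorial : ℝ) ≠ 0 := by positivity
  rw [cc, ← h, Int.negOnePow_def]
  rcases Nat.even_or_odd n with h' | h'
  · simp [h'.neg_one_pow, hn]
  · simp [h'.neg_one_pow, hn, Units.smul_def]

lemma BB_add (s t : ℝ) : BB (s + t) = BB s * BB t := by
  rw [BB_eq, BB_eq, BB_eq, neg_add, PowerSeries.binomialSeries_add, map_mul]

lemma BB_zero : BB 0 = 1 := by
  rw [BB_eq, neg_zero, PowerSeries.binomialSeries_zero, map_one]

lemma BB_mul_neg (s : ℝ) : BB s * BB (-s) = 1 := by rw [← BB_add, add_neg_cancel, BB_zero]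

lemma BB_pow (s : ℝ) (i : ℕ) : BB s ^ i = BB (i * s) := by
  induction i with
  | zero => simp [BB_zero]
  | succ i ih => rw [pow_succ, ih, ← BB_add]; congr 1; push_cast; ring

lemma coeff_BB (s : ℝ) (n : ℕ) : PowerSeries.coeff n (BB s) = cc s n := by simp [BB]

/-- Let `y = 1 - v` where `v` has nonnegative coefficients and no constant term, and let `z` be
purely imaginary. Then the coefficients of `1 / (z + y)` are dominated by those of `1 / y`: both
satisfy the same recursion, except that the former divides by `z + 1`, of modulus at least `1`,
at each step. -/
lemma dom_resolvent (y D : PowerSeries ℝ) (P : PowerSeries ℂ) (z : ℂ) (hz : z.re = 0)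
    (hy0 : PowerSeries.coeff 0 y = 1) (hy : ∀ n, PowerSeries.coeff (n + 1) y ≤ 0)
    (hD : y * D = 1)
    (hP : (PowerSeries.C z + PowerSeries.map Complex.ofRealHom y) * P = 1) (n : ℕ) :
    ‖PowerSeries.coeff n P‖ ≤ PowerSeries.coeff n D := by
  have hz1 : 1 ≤ ‖z + 1‖ := by
    have := Complex.abs_re_le_norm (z + 1)
    simpa [hz] using this
  induction n using Nat.strong_induction_on with
  | _ n ih =>
    have e1 := congrArg (PowerSeries.coeff n) hD
    have e2 := congrArg (PowerSeries.coeff n) hP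
    rw [add_mul, map_add, PowerSeries.coeff_C_mul] at e2
    rw [PowerSeries.coeff_mul] at e1 e2
    cases n with
    | zero =>
      simp only [Finset.Nat.antidiagonal_zero, Finset.sum_singleton, PowerSeries.coeff_map, hy0,
        PowerSeries.coeff_zero_one, map_one, one_mul] at e1 e2
      rw [e1]
      have : ‖z + 1‖ * ‖PowerSeries.coeff 0 P‖ = 1 := by
        rw [← norm_mul, add_mul, one_mul, e2, norm_one]
      nlinarith [norm_nonneg (PowerSeries.coeff 0 P)]
    | succ n =>
      rw [Finset.Nat.sum_antidiagonal_succ] at e1 e2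
      simp only [PowerSeries.coeff_map, hy0, map_one, one_mul, PowerSeries.coeff_one,
        Nat.succ_ne_zero, if_false, Complex.ofRealHom_eq_coe] at e1 e2
      have e3 : (z + 1) * PowerSeries.coeff (n + 1) P = - ∑ x ∈ Finset.HasAntidiagonal.antidiagonal n,
          ((PowerSeries.coeff (x.1 + 1) y : ℝ) : ℂ) * PowerSeries.coeff x.2 P := by
        linear_combination e2
      have e4 : ‖z + 1‖ * ‖PowerSeries.coeff (n + 1) P‖ ≤ PowerSeries.coeff (n + 1) D := by
        rw [← norm_mul, e3, norm_neg]
        refine (norm_sum_le _ _).trans ?_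
        rw [show PowerSeries.coeff (n + 1) D = ∑ x ∈ Finset.HasAntidiagonal.antidiagonal n,
          -(PowerSeries.coeff (x.1 + 1) y * PowerSeries.coeff x.2 D) by
            rw [Finset.sum_neg_distrib]; linarith]
        refine Finset.sum_le_sum fun x hx => ?_
        have hx' : x.1 + x.2 = n := Finset.HasAntidiagonal.mem_antidiagonal.mp hx
        rw [norm_mul, Complex.norm_real, Real.norm_eq_abs, abs_of_nonpos (hy _), neg_mul]
        have := ih x.2 (by omega)
        nlinarith [hy x.1]
      nlinarith [norm_nonneg (PowerSeries.coeff (n + 1) P)]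

/-- The series `H = s / (s² + ε)` with `s = (1 - q)^ν` has coefficients dominated by those of
`1 / s`. Indeed `2 s / (s² + ε) = 1 / (s + i√ε) + 1 / (s - i√ε)`, and for `0 ≤ ν ≤ 1` the
series `1 - s` has nonnegative coefficients, so that `dom_resolvent` applies to both terms. -/
lemma exists_H {ν ε : ℝ} (hν : 0 ≤ ν) (hν1 : ν ≤ 1) (hε : 0 ≤ ε) :
    ∃ H : PowerSeries ℝ, H * (1 + PowerSeries.C ε * BB (2 * ν)) = BB ν ∧
      ∀ n, |PowerSeries.coeff n H| ≤ cc ν n := by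
  set y := BB (-ν) with hy
  set φ := PowerSeries.map Complex.ofRealHom
  have hy0 : PowerSeries.coeff 0 y = 1 := by rw [hy, coeff_BB, cc_zero]
  have hyn : ∀ n, PowerSeries.coeff (n + 1) y ≤ 0 := fun n => by
    rw [hy, coeff_BB]; exact cc_neg_nonpos hν hν1 n
  have hD : y * BB ν = 1 := by rw [mul_comm]; exact BB_mul_neg ν
  have hc0 : PowerSeries.constantCoeff y = 1 := by
    rw [← PowerSeries.coeff_zero_eq_constantCoeff_apply, hy0]
  have hex : ∀ z : ℂ, z.re = 0 → (PowerSeries.C z + φ y) * (PowerSeries.C z + φ y)⁻¹ = 1 := by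
    intro z hz
    refine PowerSeries.mul_inv_cancel _ ?_
    intro h0
    have := congrArg Complex.re h0
    rw [map_add, ← PowerSeries.coeff_zero_eq_constantCoeff_apply,
      ← PowerSeries.coeff_zero_eq_constantCoeff_apply, PowerSeries.coeff_map, hy0] at this
    simp [hz] at this
  set δ : ℝ := Real.sqrt ε
  set z : ℂ := δ * Complex.I
  have hz : z.re = 0 := by simp [z]
  have hz' : (-z).re = 0 := by simp [z]
  set P := (PowerSeries.C z + φ y)⁻¹
  set Q := (PowerSeries.C (-z) + φ y)⁻¹
  have hP := hex z hz
  have hQ := hex (-z) hz'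
  have hzz : z * z = -(ε : ℂ) := by
    have : (δ : ℂ) * δ = ε := by
      rw [← Complex.ofReal_mul, Real.mul_self_sqrt hε]
    simp only [z]
    linear_combination (Complex.I ^ 2) * this + ε * Complex.I_sq
  have hne : PowerSeries.constantCoeff (y ^ 2 + PowerSeries.C ε) ≠ 0 := by
    simp [hc0]; positivity
  have hcancel := PowerSeries.mul_inv_cancel _ hne
  set G := (y ^ 2 + PowerSeries.C ε)⁻¹
  refine ⟨y * G, ?_, ?_⟩
  · have h2 : BB (2 * ν) = BB ν * BB ν := by rw [two_mul, BB_add]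
    rw [h2]
    linear_combination BB ν * hcancel + (G * BB ν * PowerSeries.C ε - y * G) * hD
  · intro n
    have key : φ (2 * (y * G)) = P + Q := by
      have h1 : (φ y ^ 2 + PowerSeries.C (ε : ℂ)) * φ G = 1 := by
        have := congrArg φ hcancel
        simpa [φ] using this
      have h2 : (PowerSeries.C z + φ y) * (PowerSeries.C (-z) + φ y)
          = φ y ^ 2 + PowerSeries.C (ε : ℂ) := by
        have : PowerSeries.C (ε : ℂ) = - (PowerSeries.C z * PowerSeries.C z) := by
          rw [← map_mul, hzz]; simp
        rw [this, map_neg]; ring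
      have h3 : P = (PowerSeries.C (-z) + φ y) * φ G := by
        linear_combination (-P) * h1 - P * φ G * h2 + (PowerSeries.C (-z) + φ y) * φ G * hP
      have h4 : Q = (PowerSeries.C z + φ y) * φ G := by
        linear_combination (-Q) * h1 - Q * φ G * h2 + (PowerSeries.C (z) + φ y) * φ G * hQ
      rw [h3, h4, map_mul, map_mul, map_neg]
      have : φ 2 = 2 := map_ofNat φ 2
      rw [this]; ring
    have hn := congrArg (fun s => ‖PowerSeries.coeff n s‖) key
    simp only [φ, PowerSeries.coeff_map, Complex.ofRealHom_eq_coe, Complex.norm_real,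
      map_add] at hn
    have hp := dom_resolvent y _ P z hz hy0 hyn hD hP n
    have hq := dom_resolvent y _ Q (-z) hz' hy0 hyn hD hQ n
    rw [coeff_BB] at hp hq
    have h2 : PowerSeries.coeff n (2 * (y * G)) = 2 * PowerSeries.coeff n (y * G) := by
      rw [two_mul, map_add, two_mul]
    rw [h2, norm_mul, Real.norm_eq_abs, Real.norm_eq_abs, abs_two] at hn
    have := norm_add_le (PowerSeries.coeff n P) (PowerSeries.coeff n Q)
    linarith


/-! ### Discrete Mittag-Leffler series -/

lemma cc_succ (s : ℝ) (n : ℕ) : cc s (n + 1) = cc s n * ((s + n) / (n + 1)) := by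
  unfold cc
  rw [Finset.prod_range_succ, Nat.factorial_succ]
  push_cast
  have : (n.factorial : ℝ) ≠ 0 := by positivity
  field_simp

/-- A growth bound for the coefficients under a shift of the exponent, from Bernoulli's inequality. -/
lemma cc_add_le {s α : ℝ} (hs : 0 < s) (hα : 1 ≤ α) (n : ℕ) :
    cc (s + α) n ≤ cc s n * ((s + n) / s) ^ α := by
  induction n with
  | zero => simp [cc_zero, hs.ne']
  | succ n ih =>
    have hsn : 0 < s + n := by positivity
    have hb : 1 + α * (1 / (s + n)) ≤ (1 + 1 / (s + n)) ^ α :=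
      one_add_mul_self_le_rpow_one_add (by have : 0 ≤ 1 / (s + n) := by positivity
                                           linarith) hα
    have e1 : ((s + (n + 1 : ℕ)) / s) ^ α = ((s + n) / s) ^ α * (1 + 1 / (s + n)) ^ α := by
      rw [← Real.mul_rpow (by positivity) (by positivity)]
      congr 1
      push_cast
      field_simp
      ring
    have e2 : (s + α + n) / ((n : ℝ) + 1) = ((s + n) / (n + 1)) * (1 + α * (1 / (s + n))) := by
      field_simp
      ring
    rw [cc_succ, cc_succ, e1, e2]
    calc cc (s + α) n * (((s + n) / (n + 1)) * (1 + α * (1 / (s + n))))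
        ≤ (cc s n * ((s + n) / s) ^ α) * (((s + n) / (n + 1)) * (1 + 1 / (s + n)) ^ α) := by
          have := cc_nonneg hs.le n
          gcongr
      _ = _ := by ring

lemma multichoose_le (i k : ℕ) : ((Nat.multichoose i k : ℕ) : ℝ) ≤ 2 ^ i * 2 ^ k := by
  rw [Nat.multichoose_eq, ← pow_add]
  have h1 := Nat.choose_le_two_pow (i + k - 1) k
  have h2 : 2 ^ (i + k - 1) ≤ 2 ^ (i + k) := Nat.pow_le_pow_right (by norm_num) (by omega)
  exact_mod_cast h1.trans h2

lemma tendsto_arith {α μ : ℝ} (hα : 0 < α) :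
    Tendsto (fun k : ℕ => μ + α * k) atTop atTop :=
  tendsto_atTop_add_const_left _ _ (tendsto_natCast_atTop_atTop.const_mul_atTop hα)

lemma summable_of_ratio {u ρ : ℕ → ℝ} {l : ℝ} (hu : ∀ k, 0 ≤ u k)
    (h : ∀ k, u (k + 1) ≤ ρ k * u k) (hρ : Tendsto ρ atTop (nhds l)) (hl : l < 1) :
    Summable u := by
  obtain ⟨r, hr, hr1⟩ := exists_between hl
  refine summable_of_ratio_norm_eventually_le hr1 ?_
  filter_upwards [hρ.eventually_le_const hr] with k hk
  rw [Real.norm_of_nonneg (hu _), Real.norm_of_nonneg (hu _)]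
  exact (h k).trans (mul_le_mul_of_nonneg_right hk (hu k))

lemma summable_cc {α μ ε : ℝ} (hα : 1 ≤ α) (hμ : 0 < μ) (hε : 0 ≤ ε) (hε2 : ε < 1 / 2)
    (i n : ℕ) :
    Summable fun k : ℕ => (Nat.multichoose i k : ℝ) * (-ε) ^ k * cc (μ + α * k) n := by
  have hpos : ∀ k : ℕ, 0 < μ + α * k := fun k => by positivity
  have hS : Summable fun k : ℕ => (2 * ε) ^ k * cc (μ + α * k) n := by
    refine summable_of_ratio (ρ := fun k : ℕ => 2 * ε * (1 + n / (μ + α * k)) ^ α)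
      (l := 2 * ε * (1 + 0) ^ α) (fun k => mul_nonneg (by positivity) (cc_nonneg (hpos k).le n))
      (fun k => ?_) ?_ ?_
    · have := cc_add_le (hpos k) hα n
      rw [show μ + α * ((k + 1 : ℕ) : ℝ) = μ + α * k + α by push_cast; ring, pow_succ]
      have e : (μ + α * k + n) / (μ + α * k) = 1 + n / (μ + α * k) := by
        have := (hpos k).ne'
        field_simp
      rw [e] at this
      calc (2 * ε) ^ k * (2 * ε) * cc (μ + α * k + α) n
          ≤ (2 * ε) ^ k * (2 * ε) * (cc (μ + α * k) n * (1 + n / (μ + α * k)) ^ α) := by gcongr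
        _ = _ := by ring
    · refine Tendsto.const_mul _ (Tendsto.rpow_const ?_ (Or.inl (by norm_num)))
      exact tendsto_const_nhds.add ((tendsto_arith (by linarith)).const_div_atTop _)
    · rw [add_zero, Real.one_rpow]; linarith
  refine Summable.of_norm_bounded (hS.mul_left (2 ^ i)) fun k => ?_
  rw [norm_mul, norm_mul, norm_pow, norm_neg, Real.norm_of_nonneg hε,
    Real.norm_of_nonneg (cc_nonneg (hpos k).le n), Real.norm_of_nonneg (by positivity), mul_pow]
  have := multichoose_le i k
  have h2 := cc_nonneg (hpos k).le n
  calc (Nat.multichoose i k : ℝ) * ε ^ k * cc (μ + α * k) n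
      ≤ (2 ^ i * 2 ^ k) * ε ^ k * cc (μ + α * k) n := by gcongr
    _ = _ := by ring

/-- The formal series `∑ₖ multichoose(i, k) (-ε)^k (1 - q)^{-(μ + α k)}`, which represents
`(1 - q)^{-μ} (1 + ε (1 - q)^{-α})^{-i}`; see `TT_mul_pow`. -/
noncomputable def TT (α ε : ℝ) (i : ℕ) (μ : ℝ) : PowerSeries ℝ :=
  PowerSeries.mk fun n => ∑' k : ℕ, (Nat.multichoose i k : ℝ) * (-ε) ^ k * cc (μ + α * k) n

lemma TT_zero (α ε μ : ℝ) : TT α ε 0 μ = BB μ := by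
  ext n
  rw [TT, PowerSeries.coeff_mk, coeff_BB, tsum_eq_single 0]
  · simp
  · intro k hk
    obtain ⟨k, rfl⟩ := Nat.exists_eq_succ_of_ne_zero hk
    simp

lemma TT_succ {α μ ε : ℝ} (hα : 1 ≤ α) (hμ : 0 < μ) (hε : 0 ≤ ε) (hε2 : ε < 1 / 2) (i : ℕ) :
    TT α ε (i + 1) μ + PowerSeries.C ε * TT α ε (i + 1) (μ + α) = TT α ε i μ := by
  ext n
  rw [map_add, PowerSeries.coeff_C_mul]
  simp only [TT, PowerSeries.coeff_mk]
  have s1 := summable_cc hα hμ hε hε2 (i + 1) n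
  have s2 := summable_cc hα hμ hε hε2 i n
  have s3 := summable_cc hα (show 0 < μ + α by linarith) hε hε2 (i + 1) n
  rw [s1.tsum_eq_zero_add, s2.tsum_eq_zero_add, ← tsum_mul_left, add_assoc,
    ← ((summable_nat_add_iff 1).mpr s1).tsum_add (s3.mul_left ε)]
  congr 1
  · simp
  · refine tsum_congr fun k => ?_
    rw [Nat.multichoose_succ_succ,
      show μ + α * ((k + 1 : ℕ) : ℝ) = μ + α + α * k by push_cast; ring]
    push_cast
    ring

lemma TT_shift {α μ ε : ℝ} (hα : 1 ≤ α) (hμ : 0 < μ) (hε : 0 ≤ ε) (hε2 : ε < 1 / 2) (i : ℕ)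
    (τ : ℝ) : TT α ε i (μ + τ) = BB τ * TT α ε i μ := by
  ext n
  rw [PowerSeries.coeff_mul]
  simp only [TT, PowerSeries.coeff_mk, coeff_BB, ← tsum_mul_left]
  have hs : ∀ j ∈ Finset.HasAntidiagonal.antidiagonal n, Summable fun k : ℕ =>
      cc τ j.1 * ((Nat.multichoose i k : ℝ) * (-ε) ^ k * cc (μ + α * k) j.2) :=
    fun j _ => (summable_cc hα hμ hε hε2 i j.2).mul_left _
  rw [← Summable.tsum_finsetSum hs]
  refine tsum_congr fun k => ?_
  have := congrArg (PowerSeries.coeff n) (BB_add τ (μ + α * k))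
  rw [PowerSeries.coeff_mul, coeff_BB] at this
  rw [show μ + τ + α * k = τ + (μ + α * k) by ring, this, Finset.mul_sum]
  refine Finset.sum_congr rfl fun j _ => ?_
  rw [coeff_BB, coeff_BB]; ring

lemma TT_mul_pow {α μ ε : ℝ} (hα : 1 ≤ α) (hμ : 0 < μ) (hε : 0 ≤ ε) (hε2 : ε < 1 / 2) (i : ℕ) :
    (1 + PowerSeries.C ε * BB α) ^ i * TT α ε i μ = BB μ := by
  induction i with
  | zero => simp [TT_zero]
  | succ i ih =>
    rw [← ih, ← TT_succ hα hμ hε hε2 i, TT_shift hα hμ hε hε2]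
    ring

/-- Coefficientwise domination is preserved by products. -/
lemma dom_mul {A B C D : PowerSeries ℝ}
    (h1 : ∀ n, |PowerSeries.coeff n A| ≤ PowerSeries.coeff n B)
    (h2 : ∀ n, |PowerSeries.coeff n C| ≤ PowerSeries.coeff n D) (n : ℕ) :
    |PowerSeries.coeff n (A * C)| ≤ PowerSeries.coeff n (B * D) := by
  rw [PowerSeries.coeff_mul, PowerSeries.coeff_mul]
  refine (Finset.abs_sum_le_sum_abs _ _).trans (Finset.sum_le_sum fun j _ => ?_)
  rw [abs_mul]
  exact mul_le_mul (h1 _) (h2 _) (abs_nonneg _) ((abs_nonneg _).trans (h1 _))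

lemma dom_pow {A B : PowerSeries ℝ}
    (h1 : ∀ n, |PowerSeries.coeff n A| ≤ PowerSeries.coeff n B) (i : ℕ) :
    ∀ n, |PowerSeries.coeff n (A ^ i)| ≤ PowerSeries.coeff n (B ^ i) := by
  induction i with
  | zero => intro n; simp only [pow_zero, PowerSeries.coeff_one]; split_ifs <;> simp
  | succ i ih => intro n; rw [pow_succ, pow_succ]; exact dom_mul ih h1 n

/-- The discrete form of the bound on the Mittag-Leffler functions: with `H` from `exists_H`, the
series `TT (2ν) ε i μ` equals `H^i (1 - q)^{-(μ - iν)}`, whose coefficients are dominated by those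
of `(1 - q)^{-μ}`. -/
lemma abs_tsum_cc_le {ν μ ε : ℝ} (hν : 1 / 2 ≤ ν) (hν1 : ν ≤ 1) (hμ : 0 < μ) (hε : 0 ≤ ε)
    (hε2 : ε < 1 / 2) (i : ℕ) (hi : i * ν ≤ μ) (n : ℕ) :
    |∑' k : ℕ, (Nat.multichoose i k : ℝ) * (-ε) ^ k * cc (μ + 2 * ν * k) n| ≤ cc μ n := by
  obtain ⟨H, hH, hHn⟩ := exists_H (by linarith : 0 ≤ ν) hν1 hε
  have hα : 1 ≤ 2 * ν := by linarith
  have e1 : TT (2 * ν) ε i μ = H ^ i * BB (μ - i * ν) := by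
    have h1 := TT_mul_pow hα hμ hε hε2 i
    have h2 : BB ν ^ i * BB (- (i * ν)) = 1 := by rw [BB_pow, BB_mul_neg]
    rw [show μ - i * ν = μ + -(i * ν) by ring, BB_add, ← h1]
    rw [← hH, mul_pow] at h2
    linear_combination (-TT (2 * ν) ε i μ) * h2
  have e2 := dom_mul (dom_pow (B := BB ν) (by simpa [coeff_BB] using hHn) i)
    (C := BB (μ - i * ν)) (D := BB (μ - i * ν))
    (fun n => by rw [coeff_BB, abs_of_nonneg (cc_nonneg (by linarith) n)]) n
  rw [← e1, BB_pow, ← BB_add, coeff_BB, add_sub_cancel, TT, PowerSeries.coeff_mk] at e2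
  exact e2

/-! ### Mittag-Leffler functions on the negative half-line -/

/-- The three-parameter Mittag-Leffler (Prabhakar) function
`E^{(i)}_{α,μ}(-x) = ∑ₖ multichoose(i, k) (-x)^k / Γ(μ + α k)`; the case `i = 1` is the usual
`E_{α,μ}(-x)`. Since `1 / Γ` is given the value `0` at the poles of `Γ`, the definition is the
standard one for every real `μ`. -/
noncomputable def FF (α : ℝ) (i : ℕ) (μ x : ℝ) : ℝ :=
  ∑' k : ℕ, (Nat.multichoose i k : ℝ) * (-x) ^ k / Real.Gamma (μ + α * k)

/-- The normalized coefficient `n^{1-s} cc s n`, which converges to `1 / Γ(s)`. -/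
noncomputable def aa (s : ℝ) (n : ℕ) : ℝ := (n : ℝ) ^ (1 - s) * cc s n

lemma tendsto_aa {s : ℝ} (hs : 0 < s) :
    Tendsto (aa s) atTop (nhds (1 / Real.Gamma s)) := by
  have h1 := (Real.GammaSeq_tendsto_Gamma s).inv₀ (Real.Gamma_pos_of_pos hs).ne'
  have h2 : Tendsto (fun n : ℕ => (1 + s / (n : ℝ))⁻¹) atTop (nhds 1) := by
    have : Tendsto (fun n : ℕ => 1 + s / (n : ℝ)) atTop (nhds (1 + 0)) :=
      tendsto_const_nhds.add (tendsto_natCast_atTop_atTop.const_div_atTop s)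
    simpa using this.inv₀ (by norm_num)
  have h3 := h1.mul h2
  rw [mul_one, ← one_div] at h3
  refine h3.congr' ?_
  filter_upwards [eventually_gt_atTop 0] with n hn
  have hn' : (0 : ℝ) < n := by exact_mod_cast hn
  rw [aa, cc, Real.GammaSeq, Finset.prod_range_succ, Real.rpow_sub hn', Real.rpow_one]
  have h4 : (0:ℝ) < (n:ℝ) ^ s := by positivity
  have h5 : (0:ℝ) < n.factorial := by positivity
  have h6 : (0:ℝ) < s + n := by positivity
  field_simp
  ring

lemma aa_nonneg {s : ℝ} (hs : 0 < s) (n : ℕ) : 0 ≤ aa s n :=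
  mul_nonneg (by positivity) (cc_nonneg hs.le n)

lemma aa_add_le {s α : ℝ} (hs : 0 < s) (hα : 1 ≤ α) {n : ℕ} (hn : 0 < n) :
    aa (s + α) n ≤ (1 / n + 1 / s) ^ α * aa s n := by
  have hn' : (0 : ℝ) < n := by exact_mod_cast hn
  have e : (n : ℝ) ^ (1 - (s + α)) * ((s + n) / s) ^ α = n ^ (1 - s) * (1 / n + 1 / s) ^ α := by
    rw [show 1 - (s + α) = (1 - s) + -α by ring, Real.rpow_add hn', mul_assoc,
      Real.rpow_neg hn'.le, ← Real.inv_rpow hn'.le, ← Real.mul_rpow (by positivity) (by positivity)]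
    congr 2
    field_simp
  unfold aa
  calc (n : ℝ) ^ (1 - (s + α)) * cc (s + α) n
      ≤ (n : ℝ) ^ (1 - (s + α)) * (cc s n * ((s + n) / s) ^ α) := by
        gcongr; exact cc_add_le hs hα n
    _ = cc s n * ((n : ℝ) ^ (1 - (s + α)) * ((s + n) / s) ^ α) := by ring
    _ = _ := by rw [e]; ring

/-- The Mittag-Leffler series converges, and it is the limit of its discretizations, in which
`1 / Γ(s)` is replaced by `aa s n`. -/
lemma tendsto_FF {α μ x : ℝ} (hα : 1 ≤ α) (hμ : 0 < μ) (hx : 0 ≤ x) (i : ℕ) :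
    Summable (fun k : ℕ => (Nat.multichoose i k : ℝ) * (-x) ^ k / Real.Gamma (μ + α * k)) ∧
    Tendsto (fun n : ℕ => ∑' k : ℕ, (Nat.multichoose i k : ℝ) * (-x) ^ k * aa (μ + α * k) n)
      atTop (nhds (FF α i μ x)) := by
  have hpos : ∀ k : ℕ, 0 < μ + α * k := fun k => by positivity
  obtain ⟨A, hA⟩ := (tendsto_aa hμ).bddAbove_range
  have hA' : ∀ n, aa μ n ≤ A := fun n => hA ⟨n, rfl⟩
  have hA0 : 0 ≤ A := (aa_nonneg hμ 0).trans (hA' 0)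
  have hlim : Tendsto (fun N : ℕ => 2 * x * (1 / (N : ℝ) + 0) ^ α) atTop (nhds (2 * x * (0 + 0) ^ α)) := by
    refine Tendsto.const_mul _ (Tendsto.rpow_const ?_ (Or.inr (by linarith)))
    exact (tendsto_natCast_atTop_atTop.const_div_atTop 1).add tendsto_const_nhds
  rw [add_zero, Real.zero_rpow (by linarith), mul_zero] at hlim
  obtain ⟨N, hN1, hN0⟩ := ((hlim.eventually_lt_const one_pos).and (eventually_gt_atTop 0)).exists
  have hN' : (0 : ℝ) < N := by exact_mod_cast hN0
  set ρ : ℕ → ℝ := fun k => (1 / (N : ℝ) + 1 / (μ + α * k)) ^ α with hρ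
  have hρ0 : ∀ k, 0 ≤ ρ k := fun k => by have := hpos k; positivity
  set bd : ℕ → ℝ := fun k => (2 * x) ^ k * (A * ∏ l ∈ Finset.range k, ρ l) with hbd
  have hbd0 : ∀ k, 0 ≤ bd k := fun k =>
    mul_nonneg (by positivity) (mul_nonneg hA0 (Finset.prod_nonneg fun l _ => hρ0 l))
  have hS : Summable bd := by
    refine summable_of_ratio (ρ := fun k => 2 * x * ρ k) hbd0 (fun k => ?_) ?_ hN1
    · simp only [hbd, Finset.prod_range_succ, pow_succ]
      exact le_of_eq (by ring)
    · refine Tendsto.const_mul _ (Tendsto.rpow_const ?_ (Or.inr (by linarith)))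
      exact tendsto_const_nhds.add ((tendsto_arith (by linarith)).const_div_atTop _)
  have haa : ∀ n, N ≤ n → ∀ k : ℕ, aa (μ + α * k) n ≤ A * ∏ l ∈ Finset.range k, ρ l := by
    intro n hn k
    induction k with
    | zero => simpa using hA' n
    | succ k ih =>
      have hn0 : 0 < n := by omega
      have hNn : (N : ℝ) ≤ n := by exact_mod_cast hn
      have := hpos k
      have := aa_nonneg this n
      rw [show μ + α * ((k + 1 : ℕ) : ℝ) = μ + α * k + α by push_cast; ring,
        Finset.prod_range_succ]
      calc aa (μ + α * k + α) n ≤ (1 / n + 1 / (μ + α * k)) ^ α * aa (μ + α * k) n :=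
            aa_add_le (hpos k) hα hn0
        _ ≤ ρ k * (A * ∏ l ∈ Finset.range k, ρ l) := by
            refine mul_le_mul ?_ ih this (hρ0 k)
            simp only [hρ]
            gcongr
        _ = _ := by ring
  have hbound : ∀ n, N ≤ n → ∀ k : ℕ,
      ‖(Nat.multichoose i k : ℝ) * (-x) ^ k * aa (μ + α * k) n‖ ≤ 2 ^ i * bd k := by
    intro n hn k
    rw [norm_mul, norm_mul, norm_pow, norm_neg, Real.norm_of_nonneg hx,
      Real.norm_of_nonneg (aa_nonneg (hpos k) n), Real.norm_of_nonneg (by positivity)]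
    have h1 := multichoose_le i k
    have h2 := aa_nonneg (hpos k) n
    calc (Nat.multichoose i k : ℝ) * x ^ k * aa (μ + α * k) n
        ≤ (2 ^ i * 2 ^ k) * x ^ k * (A * ∏ l ∈ Finset.range k, ρ l) := by
          gcongr
          exact haa n hn k
      _ = _ := by simp only [hbd, mul_pow]; ring
  have hpt : ∀ k : ℕ, Tendsto (fun n => (Nat.multichoose i k : ℝ) * (-x) ^ k * aa (μ + α * k) n)
      atTop (nhds ((Nat.multichoose i k : ℝ) * (-x) ^ k / Real.Gamma (μ + α * k))) := by
    intro k
    have := (tendsto_aa (hpos k)).const_mul ((Nat.multichoose i k : ℝ) * (-x) ^ k)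
    rwa [mul_one_div] at this
  refine ⟨?_, tendsto_tsum_of_dominated_convergence (hS.mul_left (2 ^ i)) hpt ?_⟩
  · refine Summable.of_norm_bounded (hS.mul_left (2 ^ i)) fun k => ?_
    refine le_of_tendsto (hpt k).norm ?_
    filter_upwards [eventually_ge_atTop N] with n hn using hbound n hn k
  · filter_upwards [eventually_ge_atTop N] with n hn using hbound n hn

/-- For `μ ≥ i α / 2` the function `E^{(i)}_{α,μ}(-x)` is bounded on `x ≥ 0` by its value at `0`;
here `α = 2ν`. -/
lemma abs_FF_le {ν μ x : ℝ} (hν : 1 / 2 ≤ ν) (hν1 : ν ≤ 1) (hμ : 0 < μ) (hx : 0 ≤ x)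
    (i : ℕ) (hi : i * ν ≤ μ) : |FF (2 * ν) i μ x| ≤ 1 / Real.Gamma μ := by
  have hα : 1 ≤ 2 * ν := by linarith
  refine le_of_tendsto_of_tendsto ((tendsto_FF hα hμ hx i).2.abs) (tendsto_aa hμ) ?_
  have hlim : Tendsto (fun N : ℕ => x * (N : ℝ) ^ (-(2 * ν))) atTop (nhds (x * 0)) :=
    ((tendsto_rpow_neg_atTop (by linarith)).comp tendsto_natCast_atTop_atTop).const_mul x
  rw [mul_zero] at hlim
  filter_upwards [hlim.eventually_lt_const (by norm_num : (0:ℝ) < 1 / 2),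
    eventually_gt_atTop 0] with n hn hn0
  have hn' : (0 : ℝ) < n := by exact_mod_cast hn0
  have h := abs_tsum_cc_le hν hν1 hμ (by positivity) hn i hi n
  have e : ∀ k : ℕ, (Nat.multichoose i k : ℝ) * (-x) ^ k * aa (μ + 2 * ν * k) n =
      (n : ℝ) ^ (1 - μ) * ((Nat.multichoose i k : ℝ) * (-(x * (n : ℝ) ^ (-(2 * ν)))) ^ k
        * cc (μ + 2 * ν * k) n) := by
    intro k
    rw [aa, show 1 - (μ + 2 * ν * k) = (1 - μ) + (-(2 * ν)) * k by ring, Real.rpow_add hn',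
      Real.rpow_mul hn'.le, Real.rpow_natCast, ← neg_mul x, mul_pow (-x)]
    ring
  simp only [e]
  rw [tsum_mul_left, abs_mul, abs_of_pos (by positivity), aa]
  gcongr

lemma one_div_Gamma_rec (s : ℝ) : 1 / Real.Gamma s = s / Real.Gamma (s + 1) := by
  rcases eq_or_ne s 0 with rfl | h
  · simp
  · rw [Real.Gamma_add_one h]
    rw [div_mul_eq_div_div, div_self h]

lemma multichoose_rec (i k : ℕ) :
    (i : ℝ) * Nat.multichoose (i + 1) k = (i + k) * Nat.multichoose i k := by
  rw [Nat.multichoose_eq, Nat.multichoose_eq, show i + 1 + k - 1 = i + k by omega]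
  rcases i with _ | i
  · rcases k with _ | k <;> simp
  · rw [show i + 1 + k - 1 = i + k by omega, show i + 1 + k = i + k + 1 by omega]
    have h3 := Nat.add_one_mul_choose_eq (i + k) i
    rw [show (i + k).choose k = (i + k).choose i from (Nat.choose_symm_add).symm,
      show (i + k + 1).choose k = (i + k + 1).choose (i + 1) from
        Nat.choose_symm_of_eq_add (by omega)]
    have h4 : ((i + k + 1 : ℕ) : ℝ) * ((i + k).choose i : ℕ) =
      ((i + k + 1).choose (i + 1) : ℕ) * ((i + 1 : ℕ) : ℝ) := by exact_mod_cast h3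
    push_cast at h4 ⊢
    linarith

/-- The termwise form of the recursion
`E^{(i)}_μ = (μ - iα) E^{(i)}_{μ+1} + iα E^{(i+1)}_{μ+1}`, which lowers the index `μ`. -/
lemma FF_rec_aux {α : ℝ} (i : ℕ) (μ x : ℝ) (k : ℕ) :
    (Nat.multichoose i k : ℝ) * (-x) ^ k / Real.Gamma (μ + α * k) =
    (μ - i * α) * ((Nat.multichoose i k : ℝ) * (-x) ^ k / Real.Gamma (μ + 1 + α * k)) +
    i * α * ((Nat.multichoose (i + 1) k : ℝ) * (-x) ^ k / Real.Gamma (μ + 1 + α * k)) := by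
  have h := multichoose_rec i k
  rw [← mul_one_div, one_div_Gamma_rec, show μ + α * k + 1 = μ + 1 + α * k by ring]
  linear_combination (-(α * (-x) ^ k / Real.Gamma (μ + 1 + α * k))) * h

/-- Boundedness on `x ≥ 0` for smaller `μ`, after `j` uses of the recursion of `FF_rec_aux`: the
pair `(i, μ)` moves to at worst `(i + j, μ + j)`, where `abs_FF_le` is available. -/
lemma FF_bounded_aux {ν : ℝ} (hν : 1 / 2 ≤ ν) (hν1 : ν ≤ 1) (j : ℕ) : ∀ (i : ℕ) (μ : ℝ),
    0 < μ + j → (i + j) * ν ≤ μ + j →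
    (∀ x, 0 ≤ x → Summable (fun k : ℕ => (Nat.multichoose i k : ℝ) * (-x) ^ k /
      Real.Gamma (μ + 2 * ν * k))) ∧ ∃ C, ∀ x, 0 ≤ x → |FF (2 * ν) i μ x| ≤ C := by
  have hα : 1 ≤ 2 * ν := by linarith
  induction j with
  | zero =>
    intro i μ h1 h2
    simp only [Nat.cast_zero, add_zero] at h1 h2
    exact ⟨fun x hx => (tendsto_FF hα h1 hx i).1, _, fun x hx => abs_FF_le hν hν1 h1 hx i h2⟩
  | succ j ih =>
    intro i μ h1 h2
    push_cast at h1 h2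
    obtain ⟨s1, C1, hC1⟩ := ih i (μ + 1) (by linarith) (by linarith)
    obtain ⟨s2, C2, hC2⟩ := ih (i + 1) (μ + 1) (by linarith) (by push_cast; linarith)
    refine ⟨fun x hx => ?_, |μ - i * (2 * ν)| * C1 + |i * (2 * ν)| * C2, fun x hx => ?_⟩
    · simp_rw [FF_rec_aux i μ x]
      exact ((s1 x hx).mul_left _).add ((s2 x hx).mul_left _)
    · have e : FF (2 * ν) i μ x = (μ - i * (2 * ν)) * FF (2 * ν) i (μ + 1) x +
          i * (2 * ν) * FF (2 * ν) (i + 1) (μ + 1) x := by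
        rw [FF, FF, FF, ← tsum_mul_left, ← tsum_mul_left,
          ← ((s1 x hx).mul_left _).tsum_add ((s2 x hx).mul_left _)]
        exact tsum_congr fun k => FF_rec_aux i μ x k
      rw [e]
      refine (abs_add_le _ _).trans ?_
      rw [abs_mul, abs_mul]
      gcongr
      · exact hC1 x hx
      · exact hC2 x hx

/-- `E_{α,μ}(-x)` is bounded on `x ≥ 0` for every real `μ`, where `α = 2ν < 2`. -/
lemma FF_bounded {ν : ℝ} (hν : 1 / 2 ≤ ν) (hν1 : ν < 1) (μ : ℝ) :
    (∀ x, 0 ≤ x → Summable (fun k : ℕ => (-x) ^ k /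
      Real.Gamma (μ + 2 * ν * k))) ∧ ∃ C, ∀ x, 0 ≤ x → |FF (2 * ν) 1 μ x| ≤ C := by
  obtain ⟨j, hj⟩ := exists_nat_gt (max (-μ) ((ν - μ) / (1 - ν)))
  have h1 := (le_max_left _ _).trans_lt hj
  have h2 := (le_max_right _ _).trans_lt hj
  rw [div_lt_iff₀ (by linarith)] at h2
  simpa using FF_bounded_aux hν hν1.le j 1 μ (by linarith) (by push_cast; linarith)

lemma FF_one (α μ x : ℝ) : FF α 1 μ x = ∑' k : ℕ, (-x) ^ k / Real.Gamma (μ + α * k) := by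
  simp [FF]

lemma FF_add {ν : ℝ} (hν : 1 / 2 ≤ ν) (hν1 : ν < 1) (μ : ℝ) {x : ℝ} (hx : 0 ≤ x) :
    FF (2 * ν) 1 μ x + x * FF (2 * ν) 1 (μ + 2 * ν) x = 1 / Real.Gamma μ := by
  rw [FF_one, FF_one, ((FF_bounded hν hν1 μ).1 x hx).tsum_eq_zero_add, ← tsum_mul_left, add_assoc,
    ← ((summable_nat_add_iff 1).mpr ((FF_bounded hν hν1 μ).1 x hx)).tsum_add
      (((FF_bounded hν hν1 (μ + 2 * ν)).1 x hx).mul_left x)]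
  have : ∀ k : ℕ, (-x) ^ (k + 1) / Real.Gamma (μ + 2 * ν * ((k + 1 : ℕ) : ℝ)) +
      x * ((-x) ^ k / Real.Gamma (μ + 2 * ν + 2 * ν * k)) = 0 := by
    intro k
    rw [show μ + 2 * ν * ((k + 1 : ℕ) : ℝ) = μ + 2 * ν + 2 * ν * k by push_cast; ring]
    ring
  simp only [this, tsum_zero]
  simp

/-- `E_{α,μ}(-x) ≥ 0` for `μ ≥ 3α/2`: by the functional equation,
`x E_{α,μ}(-x) = 1/Γ(μ-α) - E_{α,μ-α}(-x)`, and `abs_FF_le` applies with index `μ - α ≥ α/2`. -/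
lemma FF_nonneg {ν : ℝ} (hν : 1 / 2 ≤ ν) (hν1 : ν < 1) {μ : ℝ} (hμ : 3 * ν ≤ μ) {x : ℝ}
    (hx : 0 < x) : 0 ≤ FF (2 * ν) 1 μ x := by
  have h1 := FF_add hν hν1 (μ - 2 * ν) hx.le
  have h2 := abs_FF_le hν hν1.le (by linarith : 0 < μ - 2 * ν) hx.le 1 (by push_cast; linarith)
  rw [sub_add_cancel] at h1
  have h3 := (abs_le.mp h2).2
  have : 0 ≤ x * FF (2 * ν) 1 μ x := by linarith
  exact nonneg_of_mul_nonneg_right this hx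

lemma FF_decay {ν : ℝ} (hν : 1 / 2 ≤ ν) (hν1 : ν < 1) (μ : ℝ) :
    ∃ C, ∀ x, 0 ≤ x → |x * FF (2 * ν) 1 μ x| ≤ C := by
  obtain ⟨C, hC⟩ := (FF_bounded hν hν1 (μ - 2 * ν)).2
  refine ⟨|1 / Real.Gamma (μ - 2 * ν)| + C, fun x hx => ?_⟩
  have h1 := FF_add hν hν1 (μ - 2 * ν) hx
  rw [sub_add_cancel] at h1
  rw [show x * FF (2 * ν) 1 μ x = 1 / Real.Gamma (μ - 2 * ν) - FF (2 * ν) 1 (μ - 2 * ν) x by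
    linarith]
  exact (abs_sub _ _).trans (by gcongr; exact hC x hx)

/-! ### Causal convolution -/

/-- The causal convolution `(p * u)(t) = ∫₀ᵗ p(s) u(t - s) ds` of two functions on `(0, ∞)`. -/
noncomputable def cv (p u : ℝ → ℝ) (t : ℝ) : ℝ := ∫ s in (0:ℝ)..t, p s * u (t - s)

/-- Local integrability on `[0, ∞)`. -/
def LI (u : ℝ → ℝ) : Prop := ∀ T > (0:ℝ), IntegrableOn u (Set.Ioo 0 T)

/-- Equality almost everywhere on `(0, ∞)`. -/
def AEeq (u v : ℝ → ℝ) : Prop := ∀ᵐ t : ℝ, 0 < t → u t = v t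

/-- Truncation of a function to `(0, T)`. -/
noncomputable def trunc (T : ℝ) (u : ℝ → ℝ) : ℝ → ℝ := Set.indicator (Set.Ioo 0 T) u

lemma LI.trunc {u : ℝ → ℝ} (hu : LI u) {T : ℝ} (hT : 0 < T) : Integrable (trunc T u) :=
  (integrable_indicator_iff measurableSet_Ioo).2 (hu T hT)

lemma LI_iff {u : ℝ → ℝ} : LI u ↔ ∀ T > (0:ℝ), IntervalIntegrable u volume 0 T := by
  refine forall₂_congr fun T hT => ?_
  rw [intervalIntegrable_iff_integrableOn_Ioo_of_le hT.le]

lemma indicator_Ioi_trunc (T : ℝ) (u : ℝ → ℝ) :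
    Set.indicator (Set.Ioi 0) (trunc T u) = trunc T u := by
  rw [trunc, Set.indicator_indicator, Set.inter_eq_self_of_subset_right Set.Ioo_subset_Ioi_self]

lemma convolution_trunc_eq (T : ℝ) (p u : ℝ → ℝ) :
    convolution (trunc T p) (trunc T u) (ContinuousLinearMap.mul ℝ ℝ) volume =
      Set.indicator (Set.Ioi 0) (cv (trunc T p) (trunc T u)) := by
  have h := posConvolution_eq_convolution_indicator (trunc T p) (trunc T u)
    (ContinuousLinearMap.mul ℝ ℝ) volume
  rw [indicator_Ioi_trunc, indicator_Ioi_trunc] at h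
  rw [← h, posConvolution]
  rfl

lemma cv_congr {p p' u u' : ℝ → ℝ} {t : ℝ} (hp : ∀ s, 0 < s → s < t → p s = p' s)
    (hu : ∀ s, 0 < s → s < t → u s = u' s) (ht : 0 < t) : cv p u t = cv p' u' t := by
  rw [cv, cv, intervalIntegral.integral_of_le ht.le, intervalIntegral.integral_of_le ht.le,
    integral_Ioc_eq_integral_Ioo, integral_Ioc_eq_integral_Ioo]
  refine setIntegral_congr_fun measurableSet_Ioo fun s hs => ?_
  rw [hp s hs.1 hs.2, hu (t - s) (by linarith [hs.2]) (by linarith [hs.1])]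

lemma trunc_apply {T s : ℝ} (u : ℝ → ℝ) (h0 : 0 < s) (hT : s < T) : trunc T u s = u s :=
  Set.indicator_of_mem (Set.mem_Ioo.2 ⟨h0, hT⟩) u

lemma cv_trunc (p u : ℝ → ℝ) {t T : ℝ} (ht : 0 < t) (htT : t < T) :
    cv (trunc T p) (trunc T u) t = cv p u t :=
  cv_congr (fun _ h0 h1 => trunc_apply p h0 (h1.trans htT))
    (fun _ h0 h1 => trunc_apply u h0 (h1.trans htT)) ht

lemma convolution_trunc (p u : ℝ → ℝ) {t T : ℝ} (ht : 0 < t) (htT : t < T) :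
    convolution (trunc T p) (trunc T u) (ContinuousLinearMap.mul ℝ ℝ) volume t = cv p u t := by
  rw [convolution_trunc_eq, Set.indicator_of_mem (Set.mem_Ioi.2 ht), cv_trunc p u ht htT]

lemma LI_cv {p u : ℝ → ℝ} (hp : LI p) (hu : LI u) : LI (cv p u) := by
  intro T hT
  have h := ((hp.trunc hT).integrable_convolution (ContinuousLinearMap.mul ℝ ℝ)
    (hu.trunc hT)).integrableOn (s := Set.Ioo 0 T)
  exact h.congr_fun (fun t ht => convolution_trunc p u ht.1 ht.2) measurableSet_Ioo

lemma LI_congr {u v : ℝ → ℝ} (hu : LI u) (h : AEeq u v) : LI v := by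
  intro T hT
  refine (hu T hT).congr_fun_ae ?_
  filter_upwards [ae_restrict_of_ae h, ae_restrict_mem measurableSet_Ioo] with t ht h2
  exact ht h2.1

lemma cv_comm (p u : ℝ → ℝ) : cv p u = cv u p := by
  funext t
  have := intervalIntegral.integral_comp_sub_left (fun s => p s * u (t - s)) (a := 0) (b := t) t
  rw [cv, cv]
  simp only [sub_sub_cancel, sub_self, sub_zero] at this
  rw [← this]
  exact intervalIntegral.integral_congr fun s _ => mul_comm _ _

/-- A property that holds a.e. on every `(0, T)` holds a.e. on `(0, ∞)`. -/
lemma ae_of_forall_T {P : ℝ → Prop} (h : ∀ n : ℕ, ∀ᵐ t : ℝ, 0 < t → t < n + 1 → P t) :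
    ∀ᵐ t : ℝ, 0 < t → P t := by
  filter_upwards [ae_all_iff.2 h] with t ht h0
  obtain ⟨n, hn⟩ := exists_nat_gt t
  exact ht n h0 (by linarith)

lemma ae_integrable_cv {p u : ℝ → ℝ} (hp : LI p) (hu : LI u) :
    ∀ᵐ t : ℝ, 0 < t → IntervalIntegrable (fun s => p s * u (t - s)) volume 0 t := by
  refine ae_of_forall_T fun n => ?_
  have hT : (0:ℝ) < n + 1 := by positivity
  filter_upwards [(hp.trunc hT).ae_convolution_exists (ContinuousLinearMap.mul ℝ ℝ)
    (hu.trunc hT)] with t ht h0 h1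
  rw [intervalIntegrable_iff_integrableOn_Ioo_of_le h0.le]
  refine (ht.integrableOn (s := Set.Ioo 0 t)).congr_fun (fun s hs => ?_) measurableSet_Ioo
  simp only [ContinuousLinearMap.mul_apply']
  rw [trunc_apply p hs.1 (hs.2.trans h1), trunc_apply u (by linarith [hs.2]) (by linarith [hs.1])]

lemma cv_add {p u v : ℝ → ℝ} (hp : LI p) (hu : LI u) (hv : LI v) (c d : ℝ) :
    AEeq (cv p (fun s => c * u s + d * v s)) (fun t => c * cv p u t + d * cv p v t) := by
  filter_upwards [ae_integrable_cv hp hu, ae_integrable_cv hp hv] with t h1 h2 h0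
  rw [cv, cv, cv, ← intervalIntegral.integral_const_mul, ← intervalIntegral.integral_const_mul,
    ← intervalIntegral.integral_add ((h1 h0).const_mul c) ((h2 h0).const_mul d)]
  exact intervalIntegral.integral_congr fun s _ => by ring

lemma cv_congr_ae {p u u' : ℝ → ℝ} (h : AEeq u u') {t : ℝ} (ht : 0 < t) :
    cv p u t = cv p u' t := by
  rw [cv_comm p u, cv_comm p u', cv, cv]
  refine intervalIntegral.integral_congr_ae ?_
  filter_upwards [h] with s hs hs2
  rw [Set.uIoc_of_le ht.le] at hs2
  rw [hs hs2.1]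

/-- Truncating the three factors to `(0, T)` does not change an iterated convolution on `(0, T)`. -/
lemma cv_trunc_cv {p q u : ℝ → ℝ} {t T : ℝ} (ht : 0 < t) (htT : t < T) :
    convolution (convolution (trunc T p) (trunc T q) (ContinuousLinearMap.mul ℝ ℝ) volume)
      (trunc T u) (ContinuousLinearMap.mul ℝ ℝ) volume t = cv (cv p q) u t := by
  rw [convolution_trunc_eq, ← indicator_Ioi_trunc T u]
  have h := posConvolution_eq_convolution_indicator (cv (trunc T p) (trunc T q)) (trunc T u)
    (ContinuousLinearMap.mul ℝ ℝ) volume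
  rw [← h, posConvolution, Set.indicator_of_mem (Set.mem_Ioi.2 ht)]
  exact cv_congr (p := cv (trunc T p) (trunc T q)) (u := trunc T u)
    (fun _ h0 h1 => cv_trunc p q h0 (h1.trans htT))
    (fun _ h0 h1 => trunc_apply u h0 (h1.trans htT)) ht

/-- Associativity of the causal convolution, valid almost everywhere under mere local
integrability. -/
lemma cv_assoc {p q u : ℝ → ℝ} (hp : LI p) (hq : LI q) (hu : LI u) :
    AEeq (cv p (cv q u)) (cv (cv p q) u) := by
  refine ae_of_forall_T fun n => ?_
  have hT : (0:ℝ) < n + 1 := by positivity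
  set L := ContinuousLinearMap.mul ℝ ℝ
  have hp' := hp.trunc hT
  have hq' := hq.trunc hT
  have hu' := hu.trunc hT
  filter_upwards [hp'.norm.ae_convolution_exists L (hq'.norm.integrable_convolution L hu'.norm)]
    with t ht h0 h1
  have h := convolution_assoc L L L L (fun x y z => by simp [L, mul_assoc])
    hp'.aestronglyMeasurable hq'.aestronglyMeasurable hu'.aestronglyMeasurable
    (hp'.ae_convolution_exists L hq') (hq'.norm.ae_convolution_exists L hu'.norm) ht
  rw [cv_trunc_cv h0 h1] at h
  rw [h, cv_comm p (cv q u), ← cv_trunc_cv h0 h1]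
  have hc : ∀ P U : ℝ → ℝ, convolution P U L volume = convolution U P L volume := by
    intro P U
    rw [← convolution_flip]
    congr 1
    ext; simp [L]
  rw [hc]

/-! ### Riemann–Liouville and Mittag-Leffler kernels -/

/-- The Riemann–Liouville kernel `k_σ(t) = t^{σ-1} / Γ(σ)`. -/
noncomputable def kk (σ t : ℝ) : ℝ := t ^ (σ - 1) / Real.Gamma σ

lemma rlInt_eq (σ : ℝ) (u : ℝ → ℝ) (t : ℝ) : rlInt σ u t = cv (kk σ) u t := by
  rw [cv_comm, cv, rlInt, ← intervalIntegral.integral_const_mul]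
  refine intervalIntegral.integral_congr fun s _ => ?_
  simp only [kk]
  ring

lemma LI_kk {σ : ℝ} (hσ : 0 < σ) : LI (kk σ) := by
  rw [LI_iff]
  intro T hT
  exact (intervalIntegral.intervalIntegrable_rpow' (by linarith)).div_const _

lemma kk_nonneg {σ : ℝ} (hσ : 0 < σ) {t : ℝ} (ht : 0 ≤ t) : 0 ≤ kk σ t :=
  div_nonneg (Real.rpow_nonneg ht _) (Real.Gamma_pos_of_pos hσ).le

lemma kk_pos {σ : ℝ} (hσ : 0 < σ) {t : ℝ} (ht : 0 < t) : 0 < kk σ t :=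
  div_pos (Real.rpow_pos_of_pos ht _) (Real.Gamma_pos_of_pos hσ)

/-- The semigroup law `k_σ * k_τ = k_{σ+τ}` (Euler's beta integral). -/
lemma cv_kk {σ τ : ℝ} (hσ : 0 < σ) (hτ : 0 < τ) {t : ℝ} (ht : 0 < t) :
    cv (kk σ) (kk τ) t = kk (σ + τ) t := by
  have h := Complex.betaIntegral_scaled σ τ ht
  rw [Complex.betaIntegral_eq_Gamma_mul_div (σ : ℂ) τ (by simpa) (by simpa)] at h
  have h2 : ∫ x in (0:ℝ)..t, (x : ℂ) ^ ((σ : ℂ) - 1) * ((t : ℂ) - x) ^ ((τ : ℂ) - 1) =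
      ((∫ x in (0:ℝ)..t, x ^ (σ - 1) * (t - x) ^ (τ - 1) : ℝ) : ℂ) := by
    rw [← intervalIntegral.integral_ofReal]
    refine intervalIntegral.integral_congr fun x hx => ?_
    rw [Set.uIcc_of_le ht.le] at hx
    push_cast
    rw [Complex.ofReal_cpow hx.1, Complex.ofReal_cpow (by linarith [hx.2])]
    push_cast
    rfl
  rw [h2, ← Complex.ofReal_add, Complex.Gamma_ofReal, Complex.Gamma_ofReal, Complex.Gamma_ofReal,
    show ((σ + τ : ℝ) : ℂ) - 1 = ((σ + τ - 1 : ℝ) : ℂ) by push_cast; ring,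
    ← Complex.ofReal_cpow ht.le] at h
  have h3 : ∫ x in (0:ℝ)..t, x ^ (σ - 1) * (t - x) ^ (τ - 1) =
    t ^ (σ + τ - 1) * (Real.Gamma σ * Real.Gamma τ / Real.Gamma (σ + τ)) := by exact_mod_cast h
  have g1 := (Real.Gamma_pos_of_pos hσ).ne'
  have g2 := (Real.Gamma_pos_of_pos hτ).ne'
  rw [cv, kk]
  calc ∫ s in (0:ℝ)..t, kk σ s * kk τ (t - s)
      = ∫ s in (0:ℝ)..t, (1 / (Real.Gamma σ * Real.Gamma τ)) * (s ^ (σ - 1) * (t - s) ^ (τ - 1)) := by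
        refine intervalIntegral.integral_congr fun s _ => ?_
        simp only [kk]
        field_simp
    _ = _ := by
        rw [intervalIntegral.integral_const_mul, h3]
        field_simp

/-- The integrand is integrable because its Bochner integral is nonzero. -/
lemma integrable_kk_kk {σ τ : ℝ} (hσ : 0 < σ) (hτ : 0 < τ) {t : ℝ} (ht : 0 < t) :
    IntervalIntegrable (fun s => kk σ s * kk τ (t - s)) volume 0 t := by
  by_contra h
  have h1 := cv_kk hσ hτ ht
  rw [cv, intervalIntegral.integral_undef h] at h1
  exact (kk_pos (add_pos hσ hτ) ht).ne h1

/-- The Mittag-Leffler kernel `r_μ(t) = t^{μ-1} E_{α,μ}(-a t^α)`. -/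
noncomputable def RR (a α μ t : ℝ) : ℝ := t ^ (μ - 1) * FF α 1 μ (a * t ^ α)

lemma continuousOn_FF {ν : ℝ} (hν : 1 / 2 ≤ ν) (hν1 : ν < 1) (μ : ℝ) :
    ContinuousOn (FF (2 * ν) 1 μ) (Set.Ici 0) := by
  have key : ∀ R : ℝ, 0 < R → ContinuousOn (FF (2 * ν) 1 μ) (Set.Icc 0 R) := by
    intro R hR
    have h1 := ((FF_bounded hν hν1 μ).1 R hR.le).abs
    have h2 : ContinuousOn (fun x => ∑' k : ℕ, (-x) ^ k / Real.Gamma (μ + 2 * ν * k))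
        (Set.Icc 0 R) := by
      refine continuousOn_tsum (fun k => by fun_prop) h1 fun k x hx => ?_
      rw [Real.norm_eq_abs, abs_div, abs_div, abs_pow, abs_pow, abs_neg, abs_neg,
        abs_of_nonneg hx.1, abs_of_nonneg hR.le]
      have := hx.2
      have := hx.1
      gcongr
    exact h2.congr fun x _ => FF_one _ _ _
  intro x hx
  have h := key (x + 1) (by linarith [Set.mem_Ici.1 hx]) x ⟨hx, by linarith⟩
  refine h.mono_of_mem_nhdsWithin ?_
  rw [← Set.Ici_inter_Iic]
  exact inter_mem_nhdsWithin _ (Iic_mem_nhds (by linarith))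

lemma LI_RR {a α : ℝ} (ha : 0 < a) (hα1 : 1 < α) (hα2 : α < 2) {μ : ℝ} (hμ : 0 < μ) :
    LI (RR a α μ) := by
  rw [LI_iff]
  intro T hT
  refine (intervalIntegral.intervalIntegrable_rpow' (by linarith)).mul_continuousOn ?_
  have h := continuousOn_FF (ν := α / 2) (by linarith) (by linarith) μ
  rw [show 2 * (α / 2) = α by ring] at h
  refine h.comp (t := Set.Ici 0) ?_ fun t ht => ?_
  · exact (continuous_const.mul (Real.continuous_rpow_const (by linarith))).continuousOn
  · rw [Set.uIcc_of_le hT.le] at ht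
    exact mul_nonneg ha.le (Real.rpow_nonneg ht.1 _)

lemma continuousAt_RR {a α : ℝ} (ha : 0 < a) (hα1 : 1 < α) (hα2 : α < 2) (μ : ℝ) {t : ℝ}
    (ht : 0 < t) : ContinuousAt (RR a α μ) t := by
  have h := continuousOn_FF (ν := α / 2) (by linarith) (by linarith) μ
  rw [show 2 * (α / 2) = α by ring] at h
  refine (Real.continuousAt_rpow_const _ _ (Or.inl ht.ne')).mul ?_
  refine ContinuousAt.comp (g := FF α 1 μ) (f := fun t : ℝ => a * t ^ α) (h.continuousAt (Ici_mem_nhds ?_)) ?_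
  · have := Real.rpow_pos_of_pos ht α
    positivity
  · exact continuousAt_const.mul (Real.continuousAt_rpow_const _ _ (Or.inl ht.ne'))

lemma RR_term {a α μ t : ℝ} (ht : 0 < t) (k : ℕ) :
    t ^ (μ - 1) * ((-(a * t ^ α)) ^ k / Real.Gamma (μ + α * k)) = (-a) ^ k * kk (μ + α * k) t := by
  rw [kk, show μ + α * k - 1 = (μ - 1) + α * k by ring, Real.rpow_add ht, Real.rpow_mul ht.le,
    Real.rpow_natCast, neg_mul_eq_neg_mul, mul_pow]
  ring

lemma RR_hasSum {a α : ℝ} (ha : 0 < a) (hα1 : 1 < α) (hα2 : α < 2) (μ : ℝ) {t : ℝ}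
    (ht : 0 < t) : HasSum (fun k : ℕ => (-a) ^ k * kk (μ + α * k) t) (RR a α μ t) := by
  have h := (FF_bounded (ν := α / 2) (by linarith) (by linarith) μ).1 (a * t ^ α)
    (mul_nonneg ha.le (Real.rpow_nonneg ht.le _))
  rw [show 2 * (α / 2) = α by ring] at h
  have h2 := h.hasSum.mul_left (t ^ (μ - 1))
  rw [← FF_one] at h2
  simp only [RR_term ht] at h2
  exact h2

/-- The resolvent equation `r_μ + a r_{μ+α} = k_μ`. -/
lemma RR_add {a α : ℝ} (ha : 0 < a) (hα1 : 1 < α) (hα2 : α < 2) (μ : ℝ) {t : ℝ}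
    (ht : 0 < t) : RR a α μ t + a * RR a α (μ + α) t = kk μ t := by
  have h := FF_add (ν := α / 2) (by linarith) (by linarith) μ
    (x := a * t ^ α) (mul_nonneg ha.le (Real.rpow_nonneg ht.le _))
  rw [show 2 * (α / 2) = α by ring] at h
  rw [RR, RR, kk, show μ + α - 1 = (μ - 1) + α by ring, Real.rpow_add ht]
  linear_combination t ^ (μ - 1) * h

lemma RR_nonneg {a α : ℝ} (ha : 0 < a) (hα1 : 1 < α) (hα2 : α < 2) {μ : ℝ} (hμ : 3 * (α / 2) ≤ μ)
    {t : ℝ} (ht : 0 < t) : 0 ≤ RR a α μ t := by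
  have h := FF_nonneg (ν := α / 2) (by linarith) (by linarith) hμ
    (x := a * t ^ α) (mul_pos ha (Real.rpow_pos_of_pos ht _))
  rw [show 2 * (α / 2) = α by ring] at h
  exact mul_nonneg (Real.rpow_nonneg ht.le _) h

/-- Fractional integration shifts the index of the Mittag-Leffler kernel:
`r_σ * k_τ = r_{σ+τ}`, by termwise integration of the series. -/
lemma cv_RR_kk {a α : ℝ} (ha : 0 < a) (hα1 : 1 < α) (hα2 : α < 2) {σ τ : ℝ} (hσ : 0 < σ)
    (hτ : 0 < τ) {t : ℝ} (ht : 0 < t) : cv (RR a α σ) (kk τ) t = RR a α (σ + τ) t := by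
  have hk : ∀ k : ℕ, 0 < σ + α * k := fun k => by positivity
  have hI := fun k : ℕ => integrable_kk_kk (hk k) hτ ht
  have hsum := RR_hasSum ha hα1 hα2 (σ + τ) ht
  have hval : ∀ k : ℕ, ∫ s in Set.Ioo 0 t, kk (σ + α * k) s * kk τ (t - s) =
      kk (σ + τ + α * k) t := by
    intro k
    rw [← integral_Ioc_eq_integral_Ioo, ← intervalIntegral.integral_of_le ht.le]
    exact (cv_kk (hk k) hτ ht).trans (by congr 1; ring)
  have key := hasSum_integral_of_summable_integral_norm (μ := volume.restrict (Set.Ioo 0 t))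
    (F := fun (k : ℕ) s => (-a) ^ k * (kk (σ + α * k) s * kk τ (t - s)))
    (fun k => Integrable.const_mul
      ((intervalIntegrable_iff_integrableOn_Ioo_of_le ht.le).1 (hI k)) _) (by
      refine hsum.summable.abs.congr fun k => ?_
      rw [abs_mul, abs_of_nonneg (kk_nonneg (by positivity) ht.le : 0 ≤ kk (σ + τ + α * k) t),
        ← hval, ← integral_const_mul]
      refine setIntegral_congr_fun measurableSet_Ioo fun s hs => ?_
      simp only [norm_mul, Real.norm_eq_abs]
      rw [abs_of_nonneg (kk_nonneg (hk k) hs.1.le),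
        abs_of_nonneg (kk_nonneg hτ (by linarith [hs.2] : 0 ≤ t - s))])
  simp only [integral_const_mul, hval] at key
  rw [hsum.unique key, cv, intervalIntegral.integral_of_le ht.le, integral_Ioc_eq_integral_Ioo]
  refine setIntegral_congr_fun measurableSet_Ioo fun s hs => ?_
  rw [← (RR_hasSum ha hα1 hα2 σ hs.1).tsum_eq, ← tsum_mul_right]
  simp only [mul_assoc]

/-! ### Auxiliary facts on fractional integrals -/

lemma kk_one (s : ℝ) : kk 1 s = 1 := by simp [kk]

lemma kk_two {s : ℝ} : kk 2 s = s := by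
  rw [kk, Real.Gamma_two]
  norm_num

lemma cv_kk_one (u : ℝ → ℝ) (t : ℝ) : cv (kk 1) u t = ∫ s in (0:ℝ)..t, u s := by
  rw [cv_comm, cv]
  simp only [kk_one, mul_one]

/-- A function of the form `k_σ * v` with `σ > 0` and `v(0) = v'(0) = 0` has vanishing derivative
at `0` if it is differentiable there, being `o(t)` as `t → 0+`. -/
lemma deriv_cv_zero {σ : ℝ} (hσ : 0 < σ) {v : ℝ → ℝ} (hv : HasDerivAt v 0 0) (hv0 : v 0 = 0)
    (hd : DifferentiableAt ℝ (cv (kk σ) v) 0) : deriv (cv (kk σ) v) 0 = 0 := by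
  have h1 := hd.hasDerivAt.tendsto_slope_zero_right
  have hz : cv (kk σ) v 0 = 0 := by simp [cv]
  simp only [zero_add, hz, sub_zero, smul_eq_mul] at h1
  have h2 : Tendsto (fun t : ℝ => t ^ σ / Real.Gamma (σ + 2)) (nhdsWithin 0 (Set.Ioi 0)) (nhds 0) := by
    have : Tendsto (fun t : ℝ => t ^ σ / Real.Gamma (σ + 2)) (nhds 0)
        (nhds ((0:ℝ) ^ σ / Real.Gamma (σ + 2))) :=
      (Real.continuousAt_rpow_const 0 σ (Or.inr hσ.le)).div_const _
    rw [Real.zero_rpow hσ.ne', zero_div] at this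
    exact this.mono_left nhdsWithin_le_nhds
  refine tendsto_nhds_unique h1 (squeeze_zero_norm' ?_ h2)
  have h3 := hv.isLittleO.def one_pos
  simp only [hv0, sub_zero, smul_zero, one_mul] at h3
  obtain ⟨δ, hδ, hb⟩ := Metric.eventually_nhds_iff.1 h3
  filter_upwards [Ioo_mem_nhdsGT hδ] with t ht
  have hle : |cv (kk σ) v t| ≤ kk (σ + 2) t := by
    rw [← cv_kk hσ two_pos ht.1, cv, cv, ← Real.norm_eq_abs]
    refine intervalIntegral.norm_integral_le_of_norm_le ht.1.le (ae_of_all _ fun s hs => ?_)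
      (integrable_kk_kk hσ two_pos ht.1)
    rw [norm_mul, Real.norm_of_nonneg (kk_nonneg hσ hs.1.le), kk_two]
    have hts : 0 ≤ t - s := by linarith [hs.2]
    refine mul_le_mul_of_nonneg_left ?_ (kk_nonneg hσ hs.1.le)
    have := hb (y := t - s) (by rw [dist_zero_right, Real.norm_of_nonneg hts]; linarith [hs.1, ht.2])
    rwa [Real.norm_of_nonneg hts] at this
  rw [norm_mul, norm_inv, Real.norm_of_nonneg ht.1.le, Real.norm_eq_abs, inv_mul_le_iff₀ ht.1]
  refine hle.trans_eq ?_
  rw [kk, show σ + 2 - 1 = 1 + σ by ring, Real.rpow_add ht.1, Real.rpow_one, mul_div_assoc]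

/-- Taylor's formula with integral remainder: `g = k₂ * g''` when `g(0) = g'(0) = 0`. -/
lemma AC2_eq {g : ℝ → ℝ} (hAC : ∀ T > (0:ℝ), AC2On g T) (h0 : g 0 = 0) (h0' : deriv g 0 = 0) :
    LI (deriv (deriv g)) ∧ AEeq g (cv (kk 2) (deriv (deriv g))) := by
  have hLI : LI (deriv (deriv g)) := LI_iff.2 fun T hT => (hAC T hT).2.1
  have h1 : ∀ t, 0 < t → deriv g t = cv (kk 1) (deriv (deriv g)) t := by
    intro t ht
    rw [cv_kk_one, (hAC t ht).2.2 t ⟨ht.le, le_rfl⟩, h0', zero_add]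
  have h2 : LI (deriv g) := by
    refine LI_congr (LI_cv (LI_kk one_pos) hLI) (ae_of_all _ fun t ht => ?_)
    exact (h1 t ht).symm
  refine ⟨hLI, ?_⟩
  filter_upwards [cv_assoc (LI_kk one_pos) (LI_kk one_pos) hLI] with t ht ht0
  have h3 : g t = cv (kk 1) (deriv g) t := by
    rw [cv_kk_one, intervalIntegral.integral_eq_sub_of_hasDerivAt (f := g)]
    · rw [h0, sub_zero]
    · intro s hs
      rw [Set.uIcc_of_le ht0.le] at hs
      exact ((hAC t ht0).1 s hs).hasDerivAt
    · exact LI_iff.1 h2 t ht0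
  rw [h3, cv_congr (fun s _ _ => rfl) (fun s hs _ => h1 s hs) ht0, ht ht0]
  refine cv_congr (fun s hs _ => ?_) (fun s _ _ => rfl) ht0
  rw [cv_kk one_pos one_pos hs]
  norm_num

lemma cv_kk_scale {β : ℝ} (w : ℝ → ℝ) {t : ℝ} (ht : 0 < t) :
    cv (kk β) w t = t ^ β * ∫ u in (0:ℝ)..1, kk β u * w (t - t * u) := by
  have h := intervalIntegral.integral_comp_mul_left (fun s => kk β s * w (t - s)) (a := 0) (b := 1)
    ht.ne'
  rw [mul_zero, mul_one, smul_eq_mul] at h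
  have h2 : cv (kk β) w t = t * ∫ u in (0:ℝ)..1, kk β (t * u) * w (t - t * u) := by
    rw [h, ← mul_assoc, mul_inv_cancel₀ ht.ne', one_mul]
    rfl
  rw [h2, ← intervalIntegral.integral_const_mul, ← intervalIntegral.integral_const_mul]
  refine intervalIntegral.integral_congr fun u hu => ?_
  rw [Set.uIcc_of_le zero_le_one] at hu
  simp only [kk]
  rw [Real.mul_rpow ht.le hu.1, show t ^ β = t * t ^ (β - 1) by
    rw [Real.rpow_sub_one ht.ne', mul_div_cancel₀ _ ht.ne']]
  ring

lemma continuousAt_cv_kk {β : ℝ} (hβ : 0 < β) {w : ℝ → ℝ} (hw : Continuous w) {t : ℝ}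
    (ht : 0 < t) : ContinuousAt (cv (kk β) w) t := by
  have h1 : (fun t => t ^ β * ∫ u in (0:ℝ)..1, kk β u * w (t - t * u)) =ᶠ[nhds t] cv (kk β) w := by
    filter_upwards [Ioi_mem_nhds ht] with s hs
    exact (cv_kk_scale w hs).symm
  refine ContinuousAt.congr ?_ h1
  refine (Real.continuousAt_rpow_const _ _ (Or.inl ht.ne')).mul ?_
  obtain ⟨B, hB⟩ := (isCompact_Icc (a := 0) (b := t + 1)).exists_bound_of_continuousOn hw.continuousOn
  have hI : IntervalIntegrable (kk β) volume 0 1 := LI_iff.1 (LI_kk hβ) 1 one_pos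
  refine intervalIntegral.continuousAt_of_dominated_interval (bound := fun u => kk β u * B) ?_ ?_ ?_ ?_
  · refine Eventually.of_forall fun s => ?_
    have := hI.aestronglyMeasurable
    rw [Set.uIoc_of_le zero_le_one]
    exact this.mul (by fun_prop)
  · filter_upwards [Ioo_mem_nhds ht (lt_add_one t)] with s hs
    refine ae_of_all _ fun u hu => ?_
    rw [Set.uIoc_of_le zero_le_one] at hu
    rw [norm_mul, Real.norm_of_nonneg (kk_nonneg hβ hu.1.le)]
    refine mul_le_mul_of_nonneg_left (hB _ ⟨?_, ?_⟩) (kk_nonneg hβ hu.1.le)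
    · nlinarith [hs.1, hu.2]
    · nlinarith [hs.1, hu.1, hs.2]
  · exact hI.mul_const B
  · refine ae_of_all _ fun u _ => ?_
    fun_prop

/-- If a function `ℓ`, continuous on `(0, ∞)`, has the same primitive (a.e.) as a nonnegative
function, then it is nonnegative. -/
lemma nonneg_of_cv_one {l M : ℝ → ℝ} (hl : LI l) (hM : LI M) (hc : ∀ t, 0 < t → ContinuousAt l t)
    (hM0 : ∀ t, 0 < t → 0 ≤ M t) (h : AEeq (cv (kk 1) l) (cv (kk 1) M)) {t : ℝ} (ht : 0 < t) :
    0 ≤ l t := by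
  by_contra! hneg
  obtain ⟨δ, hδ, hb⟩ := Metric.eventually_nhds_iff.1
    (((hc t ht).eventually_lt_const hneg).and (lt_mem_nhds ht))
  have hdense : ∀ x y : ℝ, x < y → ∃ z ∈ Set.Ioo x y, 0 < z → cv (kk 1) l z = cv (kk 1) M z := by
    intro x y hxy
    obtain ⟨z, hz, hz2⟩ := (Measure.dense_of_ae h).exists_mem_open isOpen_Ioo
      (Set.nonempty_Ioo.2 hxy)
    exact ⟨z, hz2, hz⟩
  have hb' : ∀ z, t - δ < z → z < t + δ → l z < 0 ∧ 0 < z := by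
    intro z h1 h2
    exact hb (by rw [Real.dist_eq, abs_lt]; constructor <;> linarith)
  obtain ⟨x, hx, hxe⟩ := hdense (t - δ) t (by linarith)
  obtain ⟨y, hy, hye⟩ := hdense t (t + δ) (by linarith)
  have hx0 := (hb' x hx.1 (by linarith [hx.2])).2
  have hy0 := (hb' y (by linarith [hy.1]) hy.2).2
  have hxy : x < y := hx.2.trans hy.1
  have e1 := hxe hx0
  have e2 := hye hy0
  simp only [cv_kk_one] at e1 e2
  have i1 := LI_iff.1 hl
  have i2 := LI_iff.1 hM
  have hd : ∫ s in x..y, l s = ∫ s in x..y, M s := by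
    rw [← intervalIntegral.integral_interval_sub_left (i1 y hy0) (i1 x hx0),
      ← intervalIntegral.integral_interval_sub_left (i2 y hy0) (i2 x hx0), e1, e2]
  have hpos : 0 ≤ ∫ s in x..y, M s :=
    intervalIntegral.integral_nonneg hxy.le fun s hs => hM0 s (hx0.trans_le hs.1)
  have hlt : 0 < ∫ s in x..y, -l s := by
    refine intervalIntegral.intervalIntegral_pos_of_pos_on ?_ (fun s hs => ?_) hxy
    · exact ((i1 x hx0).symm.trans (i1 y hy0)).neg
    · have := (hb' s (by linarith [hs.1, hx.1]) (by linarith [hs.2, hy.2])).1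
      linarith
  rw [intervalIntegral.integral_neg] at hlt
  linarith

/-! ### Representation of the solution and the lower bound -/

/-- The solution formula for the linear equation, integrated to order `1 + β`: if
`k_{2-α} * (w - d s - c) = k₂ * h` and `h = k_γ * f - a w`, then
`k_{1+β} * w = d r_{3+β} + c r_{2+β} + r_{1+α+β+γ} * f` almost everywhere. -/
lemma representation {a α β γ c d : ℝ} {f w h : ℝ → ℝ} (ha : 0 < a) (hα1 : 1 < α) (hα2 : α < 2)
    (hβ : 0 < β) (hγ : 0 < γ) (hf : LI f) (hw : LI w) (hh : LI h)
    (hg : AEeq (cv (kk (2 - α)) (fun s => w s - d * s - c)) (cv (kk 2) h))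
    (heq : AEeq h (fun t => cv (kk γ) f t - a * w t)) :
    AEeq (fun t => cv (kk (1 + β)) w t - d * RR a α (3 + β) t - c * RR a α (2 + β) t)
      (cv (RR a α (1 + α + β + γ)) f) := by
  have hR : ∀ {μ : ℝ}, 0 < μ → LI (RR a α μ) := fun hμ => LI_RR ha hα1 hα2 hμ
  set v : ℝ → ℝ := fun s => w s - d * s - c
  have hv : v = fun s => 1 * w s + (-1) * (d * kk 2 s + c * kk 1 s) := by
    funext s
    simp only [v, kk_one, kk_two]
    ring
  have hk : LI (fun s => d * kk 2 s + c * kk 1 s) := fun T hT =>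
    ((LI_kk two_pos T hT).const_mul d).add ((LI_kk one_pos T hT).const_mul c)
  have hvLI : LI v := by
    rw [hv]
    exact fun T hT => ((hw T hT).const_mul 1).add ((hk T hT).const_mul (-1))
  have hkf : LI (cv (kk γ) f) := LI_cv (LI_kk hγ) hf
  -- convolution of both sides of the integrated equation with `r_{α+β-1}`
  have A1 := cv_assoc (hR (μ := α + β - 1) (by linarith)) (LI_kk (σ := 2 - α) (by linarith)) hvLI
  have A2 := cv_assoc (hR (μ := α + β - 1) (by linarith)) (LI_kk two_pos) hh
  have A3 := cv_assoc (hR (μ := 1 + α + β) (by linarith)) (LI_kk hγ) hf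
  have B1 := cv_add (hR (μ := 1 + β) (by linarith)) hw hk 1 (-1)
  have B2 := cv_add (hR (μ := 1 + β) (by linarith)) (LI_kk two_pos) (LI_kk one_pos) d c
  have B3 := cv_add (hR (μ := 1 + α + β) (by linarith)) hkf hw 1 (-a)
  have B4 := cv_add hw (hR (μ := 1 + β) (by linarith)) (hR (μ := 1 + α + β) (by linarith)) 1 a
  filter_upwards [A1, A2, A3, B1, B2, B3, B4] with t a1 a2 a3 b1 b2 b3 b4 ht
  specialize a1 ht; specialize a2 ht; specialize a3 ht
  specialize b1 ht; specialize b2 ht; specialize b3 ht; specialize b4 ht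
  have hsh : ∀ {σ τ ρ : ℝ}, 0 < σ → 0 < τ → σ + τ = ρ → ∀ u : ℝ → ℝ,
      cv (cv (RR a α σ) (kk τ)) u t = cv (RR a α ρ) u t := by
    intro σ τ ρ hσ hτ hρ u
    refine cv_congr (fun s hs _ => ?_) (fun s _ _ => rfl) ht
    rw [cv_RR_kk ha hα1 hα2 hσ hτ hs, hρ]
  rw [hsh (ρ := 1 + β) (by linarith) (by linarith) (by ring), cv_congr_ae hg ht, a2,
    hsh (ρ := 1 + α + β) (by linarith) two_pos (by ring), cv_congr_ae heq ht] at a1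
  rw [hsh (ρ := 1 + α + β + γ) (by linarith) hγ rfl] at a3
  rw [← hv] at b1
  rw [cv_RR_kk ha hα1 hα2 (by linarith) two_pos ht, cv_RR_kk ha hα1 hα2 (by linarith) one_pos ht]
    at b2
  have e3 : cv (RR a α (1 + α + β)) (fun t => cv (kk γ) f t - a * w t) t =
      cv (RR a α (1 + α + β)) (fun s => 1 * cv (kk γ) f s + -a * w s) t :=
    cv_congr (fun s _ _ => rfl) (fun s _ _ => by ring) ht
  have e4 : cv w (fun s => 1 * RR a α (1 + β) s + a * RR a α (1 + α + β) s) t =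
      cv (kk (1 + β)) w t := by
    rw [cv_comm (kk (1 + β))]
    refine cv_congr (fun s _ _ => rfl) (fun s hs _ => ?_) ht
    rw [← RR_add ha hα1 hα2 (1 + β) hs, show 1 + β + α = 1 + α + β by ring]
    ring
  rw [e4, cv_comm w, cv_comm w] at b4
  rw [show 3 + β = 1 + β + 2 by ring, show 2 + β = 1 + β + 1 by ring]
  linarith

/-- The lower bound for `k_β * w = ₀I_t^β w` by the free part `d r_{2+β} + c r_{1+β}` of the
solution. The forced part is `r_{α+β+γ} * f`, nonnegative because `α + β + γ ≥ 3α/2`. The formula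
of `representation` is one integration above this inequality, which is why the primitives are
compared. -/
lemma lower_bound {a α β γ c d : ℝ} {f w h : ℝ → ℝ} (ha : 0 < a) (hα1 : 1 < α) (hα2 : α < 2)
    (hβ : 0 < β) (hγ : 0 < γ) (hβγ : α / 2 ≤ γ + β) (hf : LI f) (hw : Continuous w) (hh : LI h)
    (hf0 : ∀ᵐ t : ℝ, 0 < t → 0 ≤ f t)
    (hg : AEeq (cv (kk (2 - α)) (fun s => w s - d * s - c)) (cv (kk 2) h))
    (heq : AEeq h (fun t => cv (kk γ) f t - a * w t)) {t : ℝ} (ht : 0 < t) :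
    d * RR a α (2 + β) t + c * RR a α (1 + β) t ≤ cv (kk β) w t := by
  have hR : ∀ {μ : ℝ}, 0 < μ → LI (RR a α μ) := fun hμ => LI_RR ha hα1 hα2 hμ
  have hwLI : LI w := LI_iff.2 fun T _ => hw.intervalIntegrable 0 T
  have hkw := LI_cv (LI_kk hβ) hwLI
  have hrr : LI (fun s => d * RR a α (2 + β) s + c * RR a α (1 + β) s) := fun T hT =>
    ((hR (by linarith) T hT).const_mul d).add ((hR (by linarith) T hT).const_mul c)
  have hM : LI (cv (RR a α (α + β + γ)) f) := LI_cv (hR (by linarith)) hf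
  suffices 0 ≤ 1 * cv (kk β) w t + (-1) * (d * RR a α (2 + β) t + c * RR a α (1 + β) t) by
    linarith
  refine nonneg_of_cv_one
    (l := fun t => 1 * cv (kk β) w t + (-1) * (d * RR a α (2 + β) t + c * RR a α (1 + β) t))
    (M := cv (RR a α (α + β + γ)) f)
    (fun T hT => ((hkw T hT).const_mul 1).add ((hrr T hT).const_mul (-1))) hM ?_ ?_ ?_ ht
  · intro s hs
    exact (continuousAt_const.mul (continuousAt_cv_kk hβ hw hs)).add (continuousAt_const.mul
      ((continuousAt_const.mul (continuousAt_RR ha hα1 hα2 _ hs)).add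
        (continuousAt_const.mul (continuousAt_RR ha hα1 hα2 _ hs))))
  · intro s hs
    rw [cv_comm, cv, intervalIntegral.integral_of_le hs.le, integral_Ioc_eq_integral_Ioo]
    refine integral_nonneg_of_ae ?_
    filter_upwards [ae_restrict_of_ae hf0, ae_restrict_mem measurableSet_Ioo] with r hr hr2
    exact mul_nonneg (hr hr2.1)
      (RR_nonneg ha hα1 hα2 (by linarith) (by linarith [hr2.2]))
  · filter_upwards [representation ha hα1 hα2 hβ hγ hf hwLI hh hg heq,
      cv_add (LI_kk one_pos) hkw hrr 1 (-1),
      cv_add (LI_kk one_pos) (hR (μ := 2 + β) (by linarith)) (hR (μ := 1 + β) (by linarith)) d c,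
      cv_assoc (LI_kk one_pos) (LI_kk hβ) hwLI,
      cv_assoc (LI_kk one_pos) (hR (μ := α + β + γ) (by linarith)) hf] with s h1 h2 h3 h4 h5 hs
    specialize h1 hs; specialize h2 hs; specialize h3 hs; specialize h4 hs; specialize h5 hs
    have e4 : cv (cv (kk 1) (kk β)) w s = cv (kk (1 + β)) w s :=
      cv_congr (fun r hr _ => cv_kk one_pos hβ hr) (fun r _ _ => rfl) hs
    have e5 : cv (cv (kk 1) (RR a α (α + β + γ))) f s = cv (RR a α (1 + α + β + γ)) f s := by
      refine cv_congr (fun r hr _ => ?_) (fun r _ _ => rfl) hs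
      rw [cv_comm, cv_RR_kk ha hα1 hα2 (by linarith) one_pos hr]
      congr 1
      ring
    rw [e4] at h4
    rw [h5, e5, h2, h3, h4, ← h1, cv_comm (kk 1), cv_comm (kk 1),
      cv_RR_kk ha hα1 hα2 (by linarith) one_pos hs, cv_RR_kk ha hα1 hα2 (by linarith) one_pos hs,
      show 3 + β = 2 + β + 1 by ring, show (2 : ℝ) + β = 1 + β + 1 by ring]
    ring

/-- The free part of the solution behaves like `d t^{1+β-α} / (a Γ(2+β-α))` at infinity. -/
lemma tendsto_free {a α : ℝ} (ha : 0 < a) (hα1 : 1 < α) (hα2 : α < 2) (β c d : ℝ) :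
    Tendsto (fun t : ℝ => t ^ (α - β - 1) * (d * RR a α (2 + β) t + c * RR a α (1 + β) t)) atTop
      (nhds (d * (1 / a * (1 / Real.Gamma (2 + β - α))))) := by
  have hν : (1:ℝ) / 2 ≤ α / 2 := by linarith
  have hν1 : α / 2 < 1 := by linarith
  have hαα : 2 * (α / 2) = α := by ring
  obtain ⟨C1, hC1⟩ := FF_decay hν hν1 (2 + β - α)
  obtain ⟨C2, hC2⟩ := FF_decay hν hν1 (1 + β)
  rw [hαα] at hC1 hC2
  have t1 : Tendsto (fun t : ℝ => FF α 1 (2 + β - α) (a * t ^ α)) atTop (nhds 0) := by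
    have h2 : Tendsto (fun t : ℝ => C1 / a * t ^ (-α)) atTop (nhds 0) := by
      simpa using (tendsto_rpow_neg_atTop (by linarith : 0 < α)).const_mul (C1 / a)
    refine squeeze_zero_norm' ?_ h2
    filter_upwards [eventually_gt_atTop 0] with t ht
    have hp := Real.rpow_pos_of_pos ht α
    have := hC1 (a * t ^ α) (by positivity)
    rw [abs_mul, abs_of_pos (by positivity : 0 < a * t ^ α)] at this
    rw [Real.norm_eq_abs, Real.rpow_neg ht.le, ← div_eq_mul_inv, div_div, le_div_iff₀ (by positivity)]
    linarith
  have t2 : Tendsto (fun t : ℝ => t ^ (α - 1) * FF α 1 (1 + β) (a * t ^ α)) atTop (nhds 0) := by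
    have h2 : Tendsto (fun t : ℝ => C2 / a * t⁻¹) atTop (nhds 0) := by
      simpa using tendsto_inv_atTop_zero.const_mul (C2 / a)
    refine squeeze_zero_norm' ?_ h2
    filter_upwards [eventually_gt_atTop 0] with t ht
    have hp := Real.rpow_pos_of_pos ht α
    have := hC2 (a * t ^ α) (by positivity)
    rw [abs_mul, abs_of_pos (by positivity : 0 < a * t ^ α)] at this
    rw [norm_mul, Real.norm_eq_abs, Real.norm_eq_abs, Real.rpow_sub_one ht.ne',
      abs_of_pos (by positivity : 0 < t ^ α / t), ← div_eq_mul_inv, div_div,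
      le_div_iff₀ (by positivity)]
    calc t ^ α / t * |FF α 1 (1 + β) (a * t ^ α)| * (a * t)
        = a * t ^ α * |FF α 1 (1 + β) (a * t ^ α)| := by field_simp
      _ ≤ C2 := this
  have t3 := (((tendsto_const_nhds (x := 1 / Real.Gamma (2 + β - α))).sub t1).const_mul
    (1 / a)).const_mul d |>.add (t2.const_mul c)
  simp only [sub_zero, mul_zero, add_zero] at t3
  refine t3.congr' ?_
  filter_upwards [eventually_gt_atTop 0] with t ht
  have hp := Real.rpow_pos_of_pos ht α
  have h := FF_add hν hν1 (2 + β - α) (x := a * t ^ α) (by positivity)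
  rw [hαα, show 2 + β - α + α = 2 + β by ring] at h
  rw [← h, RR, RR, mul_add, add_sub_cancel_left]
  congr 1
  · rw [show t ^ (α - β - 1) * (d * (t ^ (2 + β - 1) * FF α 1 (2 + β) (a * t ^ α))) =
      t ^ (α - β - 1) * t ^ (2 + β - 1) * (d * FF α 1 (2 + β) (a * t ^ α)) by ring,
      ← Real.rpow_add ht, show α - β - 1 + (2 + β - 1) = α by ring]
    field_simp
  · rw [show t ^ (α - β - 1) * (c * (t ^ (1 + β - 1) * FF α 1 (1 + β) (a * t ^ α))) =
      t ^ (α - β - 1) * t ^ (1 + β - 1) * (c * FF α 1 (1 + β) (a * t ^ α)) by ring,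
      ← Real.rpow_add ht, show α - β - 1 + (1 + β - 1) = α - 1 by ring]
    ring

/-- Lemma 2.3 (vii): for 0 < γ < α/2, α+γ ≤ 2 and w'(0) > 0, for every β with α/2 ≤ γ+β < 1 and 0 < β < α, liminf t^{α−β−1} (₀I_t^β w)(t) > 0. -/
theorem liminf_pos_vii
    (γ α p a b : ℝ) (f w : ℝ → ℝ)
    (hγ : 0 < γ) (hα1 : 1 < α) (hα2 : α < 2) (hp : 1 < p) (ha : 0 < a) (hb : 0 < b)
    (hf : ∀ T > (0:ℝ), IntervalIntegrable f volume 0 T)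
    (hw : ContDiff ℝ 1 w)
    (hw0 : ∃ t : ℝ, 0 ≤ t ∧ w t ≠ 0)
    (hAC : ∀ T > (0:ℝ), AC2On (capKernel α w) T)
    (heq : ∀ᵐ t ∂(volume.restrict (Set.Ici (0:ℝ))),
      caputoD α w t + a * w t = rlInt γ f t ∧ f t ≥ b * |w t| ^ p)
    (hγα : γ < α / 2) (hαγ : α + γ ≤ 2) (hw' : 0 < deriv w 0) :
    ∀ β : ℝ, α / 2 ≤ γ + β → γ + β < 1 → 0 < β → β < α →
      0 < liminf (fun t : ℝ => ((t ^ (α - β - 1) * rlInt β w t : ℝ) : EReal)) atTop := by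
  intro β hβγ _ hβ _
  have heq' := (ae_restrict_iff' measurableSet_Ici).1 heq
  have hcap : capKernel α w = cv (kk (2 - α)) (fun s => w s - deriv w 0 * s - w 0) := by
    funext t
    rw [capKernel, if_neg hα2.ne, rlInt_eq]
  have hder : HasDerivAt (fun s => w s - deriv w 0 * s - w 0) 0 0 := by
    have h1 := (hw.differentiable one_ne_zero 0).hasDerivAt
    have h2 := (h1.sub ((hasDerivAt_id (0:ℝ)).const_mul (deriv w 0))).sub_const (w 0)
    simpa using h2
  have hd0 : deriv (capKernel α w) 0 = 0 := by
    have hdiff := (hAC 1 one_pos).1 0 ⟨le_rfl, zero_le_one⟩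
    rw [hcap] at hdiff ⊢
    exact deriv_cv_zero (by linarith) hder (by simp) hdiff
  have hz : capKernel α w 0 = 0 := by
    rw [hcap]
    simp [cv]
  obtain ⟨hLI, hg⟩ := AC2_eq hAC hz hd0
  rw [hcap] at hg hLI
  have hlow : ∀ t, 0 < t → deriv w 0 * RR a α (2 + β) t + w 0 * RR a α (1 + β) t ≤ rlInt β w t := by
    intro t ht
    rw [rlInt_eq]
    refine lower_bound ha hα1 hα2 hβ hγ hβγ (LI_iff.2 hf) hw.continuous hLI ?_ hg ?_ ht
    · filter_upwards [heq'] with s hs hs0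
      exact le_trans (mul_nonneg hb.le (Real.rpow_nonneg (abs_nonneg _) _)) (hs hs0.le).2
    · filter_upwards [heq'] with s hs hs0
      have := (hs hs0.le).1
      rw [rlInt_eq, caputoD, hcap] at this
      linarith
  have hlim := tendsto_free ha hα1 hα2 β (w 0) (deriv w 0)
  have hΓ := Real.Gamma_pos_of_pos (by linarith : 0 < 2 + β - α)
  have hpos : 0 < deriv w 0 * (1 / a * (1 / Real.Gamma (2 + β - α))) := by positivity
  set L := deriv w 0 * (1 / a * (1 / Real.Gamma (2 + β - α)))
  have hhalf : (0 : EReal) < ((L / 2 : ℝ) : EReal) := by exact_mod_cast half_pos hpos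
  refine hhalf.trans_le (le_liminf_of_le (by isBoundedDefault) ?_)
  filter_upwards [hlim.eventually_const_lt (half_lt_self hpos), eventually_gt_atTop 0] with t h1 ht
  have h2 := mul_le_mul_of_nonneg_left (hlow t ht) (Real.rpow_nonneg ht.le (α - β - 1))
  exact_mod_cast h1.le.trans h2
end

section
/- Let γ > 0, 1 < α < 2, p > 1, a > 0, b > 0. There exist positive constants K₁ and K₂, depending only on α, γ, p, a, b but not on T, such that: for every T > 0 and every w ∈ C¹([0,T]) with w ≢ 0 for which the function t ↦ ₀I_t^{2−α}(w(s) − w'(0)s − w(0)) belongs to AC²([0,T]) and for almost every t ∈ [0,T] one has (₀D_t^α w)(t) + a·w(t) ≥ b·(₀I_t^γ (|w|^p))(t), the inequality T·w'(0) + w(0) ≤ K₁·T^{α+γ−pγ/(p−1)} + K₂·T^{−(α+γ)/(p−1)} holds. -/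
/-!
The proof is a test-function argument. Multiply the inequality by
`φ(t) = (T - t)^l - (θ/T) (T - t)^(l+1)`, which is nonnegative for `0 ≤ θ ≤ 1`, and integrate over
`[0, T]`. Fubini and the Beta integral move every fractional integral onto `φ`
(`integral_rpow_mul_rlInt`); since the function under the Caputo derivative and its first derivative
vanish at `0`, the second derivative moves as well (`integral_rpow_mul_caputoD`). The outcome,
`tested_inequality`, bounds `b ∫ ρ |w|^p` by `∫ ψ (w(s) - w'(0) s - w(0)) ds + a ∫ φ w`, where
`ρ ≥ δ (T - s)^(l+γ)` for some `δ > 0` and `|ψ| ≤ C (T - s)^(l-α)`.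

With `θ = 0`, the numbers `w(0)` and `T w'(0)` would enter `∫ ψ (w'(0) s + w(0)) ds` with different
weights. For `m = l - α + 1` and `θ = m (m+2) / ((m+1) (m+α)) < 1`, this integral is exactly
`E T^m (T w'(0) + w(0))` with `E > 0`. Young's inequality absorbs the terms linear in `w` into
`b ∫ ρ |w|^p` (`young_pointwise`, `young_integrated`), at the cost of two explicit powers of `T`;
dividing by `E T^m` leaves the asserted bound.
-/

open MeasureTheory Filter

/-! ### Fractional integrals against powers -/

lemma beta_integral_interval {σ μ s T : ℝ} (hσ : 0 < σ) (hμ : 0 ≤ μ) (hs : s ≤ T) :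
    ∫ t in s..T, (T - t) ^ μ * (t - s) ^ (σ - 1)
      = Real.Gamma σ * Real.Gamma (μ + 1) / Real.Gamma (μ + σ + 1) * (T - s) ^ (μ + σ) := by
  rcases hs.eq_or_lt with rfl | hs
  · simp [Real.zero_rpow (by positivity : μ + σ ≠ 0)]
  have hpos : 0 < T - s := sub_pos.2 hs
  have h1 : ∫ t in s..T, (T - t) ^ μ * (t - s) ^ (σ - 1)
      = ∫ x in (0:ℝ)..(T - s), x ^ (σ - 1) * (T - s - x) ^ μ := by
    have := intervalIntegral.integral_comp_sub_right
      (fun x : ℝ => x ^ (σ - 1) * (T - s - x) ^ μ) s (a := s) (b := T)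
    rw [sub_self] at this
    rw [← this]
    congr 1; ext t
    rw [mul_comm]; congr 2; ring
  rw [h1]
  have h2 := Complex.betaIntegral_scaled (σ : ℂ) ((μ + 1 : ℝ) : ℂ) hpos
  rw [Complex.betaIntegral_eq_Gamma_mul_div _ _ (by simpa using hσ)
    (by simpa using (by positivity : 0 < μ + 1))] at h2
  have h3 : ∫ x in (0:ℝ)..(T - s), (x : ℂ) ^ ((σ : ℂ) - 1) *
      (((T - s : ℝ) : ℂ) - x) ^ (((μ + 1 : ℝ) : ℂ) - 1)
      = ((∫ x in (0:ℝ)..(T - s), x ^ (σ - 1) * (T - s - x) ^ μ : ℝ) : ℂ) := by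
    rw [← intervalIntegral.integral_ofReal]
    refine intervalIntegral.integral_congr fun x hx => ?_
    rw [Set.uIcc_of_le hpos.le] at hx
    rw [Complex.ofReal_mul, Complex.ofReal_cpow hx.1, Complex.ofReal_cpow (by linarith [hx.2])]
    push_cast
    simp
  rw [h3] at h2
  apply Complex.ofReal_injective
  rw [h2]
  push_cast [← Complex.Gamma_ofReal, Complex.ofReal_cpow hpos.le]
  rw [show (σ : ℂ) + (μ + 1) - 1 = μ + σ by ring, show (σ : ℂ) + (μ + 1) = μ + σ + 1 by ring,
    mul_comm]

/-- Fractional integration by parts against a power of `T - t`: by Fubini, the right-sided fractional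
integral of `(T - t)^μ` appears, which the Beta integral evaluates. Integrability of `f` suffices, so
the lemma applies with `σ = 1` to the second derivative of an `AC2On` function. -/
lemma integral_rpow_mul_rlInt {σ μ T : ℝ} {f : ℝ → ℝ} (hσ : 0 < σ) (hμ : 0 ≤ μ) (hT : 0 < T)
    (hf : IntervalIntegrable f volume 0 T) :
    IntervalIntegrable (fun t => (T - t) ^ μ * rlInt σ f t) volume 0 T ∧
    ∫ t in (0:ℝ)..T, (T - t) ^ μ * rlInt σ f t
      = Real.Gamma (μ + 1) / Real.Gamma (μ + σ + 1) * ∫ s in (0:ℝ)..T, (T - s) ^ (μ + σ) * f s := by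
  -- The half-open intervals are chosen so that `F s * k (t - s)` is supported on `s ∈ (0, t]` for
  -- every `t ∈ (0, T]`, matching the interval integral at every point.
  set F : ℝ → ℝ := (Set.Ioc 0 T).indicator f with hF
  set k : ℝ → ℝ := (Set.Ico 0 T).indicator (fun x => x ^ (σ - 1)) with hk
  set h : ℝ → ℝ := (Set.Ioc 0 T).indicator (fun t => (T - t) ^ μ) with hh
  have hFi : Integrable F volume := by
    rw [hF, integrable_indicator_iff measurableSet_Ioc]
    exact (intervalIntegrable_iff_integrableOn_Ioc_of_le hT.le).1 hf
  have hki : Integrable k volume := by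
    rw [hk, integrable_indicator_iff measurableSet_Ico]
    exact (intervalIntegrable_iff_integrableOn_Ico_of_le hT.le).1
      (intervalIntegral.intervalIntegrable_rpow' (by linarith))
  have hhm : Measurable h := by
    refine Measurable.indicator ?_ measurableSet_Ioc
    fun_prop
  have hhb : ∀ t, ‖h t‖ ≤ T ^ μ := by
    intro t
    rw [hh]
    by_cases ht : t ∈ Set.Ioc 0 T
    · rw [Set.indicator_of_mem ht, Real.norm_of_nonneg (Real.rpow_nonneg (by linarith [ht.2]) _)]
      exact Real.rpow_le_rpow (by linarith [ht.2]) (by linarith [ht.1]) hμ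
    · rw [Set.indicator_of_notMem ht, norm_zero]; positivity
  have hprod : Integrable (fun q : ℝ × ℝ => h q.1 * (F q.2 * k (q.1 - q.2)))
      (volume.prod volume) := by
    refine Integrable.bdd_mul (c := T ^ μ)
      (hFi.convolution_integrand (ContinuousLinearMap.mul ℝ ℝ) hki) ?_ ?_
    · exact (hhm.comp measurable_fst).aestronglyMeasurable
    · exact ae_of_all _ fun q => hhb q.1
  have hleft : ∀ t, ∫ s, h t * (F s * k (t - s))
      = (Set.Ioc 0 T).indicator (fun t => (T - t) ^ μ * (Real.Gamma σ * rlInt σ f t)) t := by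
    intro t
    by_cases ht : t ∈ Set.Ioc 0 T
    · rw [integral_const_mul, Set.indicator_of_mem ht, hh, Set.indicator_of_mem ht]
      congr 1
      rw [rlInt, ← mul_assoc, mul_one_div_cancel (Real.Gamma_pos_of_pos hσ).ne', one_mul,
        intervalIntegral.integral_of_le ht.1.le, ← integral_indicator measurableSet_Ioc]
      congr 1; ext s
      simp only [hF, hk, Set.indicator, Set.mem_Ioc, Set.mem_Ico]
      have := ht.1
      have := ht.2
      split_ifs <;> first | ring1 | (exfalso; grind)
    · rw [hh]; simp [Set.indicator_of_notMem ht]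
  have hright : ∀ s, ∫ t, h t * (F s * k (t - s))
      = (Set.Ioc 0 T).indicator (fun s => Real.Gamma σ * Real.Gamma (μ + 1) /
          Real.Gamma (μ + σ + 1) * ((T - s) ^ (μ + σ) * f s)) s := by
    intro s
    by_cases hs : s ∈ Set.Ioc 0 T
    · rw [Set.indicator_of_mem hs, ← mul_assoc, ← beta_integral_interval hσ hμ hs.2,
        intervalIntegral.integral_of_le hs.2, ← integral_Icc_eq_integral_Ioc,
        ← integral_indicator measurableSet_Icc, ← integral_mul_const]
      congr 1; ext t
      simp only [hF, hk, hh, Set.indicator, Set.mem_Ioc, Set.mem_Ico, Set.mem_Icc]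
      have := hs.1
      have := hs.2
      split_ifs <;> first | ring1 | (exfalso; grind)
    · rw [hF]; simp [Set.indicator_of_notMem hs]
  have hG := (Real.Gamma_pos_of_pos hσ).ne'
  constructor
  · have h1 := hprod.integral_prod_left
    simp only [hleft] at h1
    rw [integrable_indicator_iff measurableSet_Ioc,
      ← intervalIntegrable_iff_integrableOn_Ioc_of_le hT.le] at h1
    convert h1.const_mul (Real.Gamma σ)⁻¹ using 2 with t
    field_simp
  · have h2 := integral_integral_swap (f := fun t s => h t * (F s * k (t - s))) hprod
    simp only [hleft, hright] at h2
    rw [integral_indicator measurableSet_Ioc, integral_indicator measurableSet_Ioc,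
      ← intervalIntegral.integral_of_le hT.le, ← intervalIntegral.integral_of_le hT.le,
      intervalIntegral.integral_const_mul] at h2
    apply mul_left_cancel₀ hG
    rw [← intervalIntegral.integral_const_mul, ← mul_assoc, ← mul_div_assoc, ← h2]
    congr 1; ext t; ring

lemma intervalIntegrable_sub_rpow {q : ℝ} (T : ℝ) (hq : -1 < q) :
    IntervalIntegrable (fun s : ℝ => (T - s) ^ q) volume 0 T := by
  have := (intervalIntegral.intervalIntegrable_rpow' (a := 0) (b := T) hq).comp_sub_left T
  simpa using this.symm

lemma integral_sub_rpow {q : ℝ} (T : ℝ) (hq : -1 < q) :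
    ∫ s in (0:ℝ)..T, (T - s) ^ q = T ^ (q + 1) / (q + 1) := by
  rw [intervalIntegral.integral_comp_sub_left (fun x : ℝ => x ^ q) T, sub_self, sub_zero,
    integral_rpow (Or.inl hq), Real.zero_rpow (by linarith), sub_zero]

lemma rlInt_one (f : ℝ → ℝ) (t : ℝ) : rlInt 1 f t = ∫ s in (0:ℝ)..t, f s := by
  simp [rlInt]

/-! ### The Caputo derivative against powers -/

/-- If `v(0) = v'(0) = 0` then `₀I^σ v = O(t^{1+σ})` at `0⁺`, so whenever `₀I^σ v` is differentiable at
`0` its derivative there vanishes. -/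
lemma deriv_rlInt_zero {σ : ℝ} {v : ℝ → ℝ} (hσ : 0 < σ) (hv : HasDerivAt v 0 0) (hv0 : v 0 = 0)
    (hd : DifferentiableAt ℝ (rlInt σ v) 0) : deriv (rlInt σ v) 0 = 0 := by
  have hg0 : rlInt σ v 0 = 0 := by simp [rlInt]
  have hslope : Tendsto (fun t => t⁻¹ * rlInt σ v t) (nhdsWithin 0 (Set.Ioi 0))
      (nhds (deriv (rlInt σ v) 0)) := by
    have := (hasDerivAt_iff_tendsto_slope.1 hd.hasDerivAt).mono_left
      (nhdsWithin_mono 0 (show Set.Ioi (0:ℝ) ⊆ {0}ᶜ from fun x hx => ne_of_gt hx))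
    refine this.congr fun t => ?_
    simp [slope, hg0]
  have hsmall : ∀ᶠ t in nhds (0:ℝ), |v t| ≤ |t| := by
    have := (hasDerivAt_iff_isLittleO.1 hv).def one_pos
    simpa [hv0] using this
  obtain ⟨δ, hδ, hball⟩ := Metric.eventually_nhds_iff.1 hsmall
  have hzero : Tendsto (fun t => t⁻¹ * rlInt σ v t) (nhdsWithin 0 (Set.Ioi 0)) (nhds 0) := by
    refine squeeze_zero_norm' (a := fun t => |1 / Real.Gamma σ| * (t ^ σ / σ)) ?_ ?_
    · filter_upwards [Ioo_mem_nhdsGT hδ] with t ht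
      have hb : ‖∫ s in (0:ℝ)..t, (t - s) ^ (σ - 1) * v s‖
          ≤ ∫ s in (0:ℝ)..t, t * (t - s) ^ (σ - 1) := by
        refine intervalIntegral.norm_integral_le_of_norm_le ht.1.le (ae_of_all _ fun s hs => ?_)
          ((intervalIntegrable_sub_rpow t (by linarith)).const_mul t)
        have h1 : |v s| ≤ t := by
          have := hball (y := s) (by
            rw [Real.dist_eq, sub_zero, abs_of_pos hs.1]; exact hs.2.trans_lt ht.2)
          rw [abs_of_pos hs.1] at this
          exact this.trans hs.2
        rw [norm_mul, Real.norm_of_nonneg (Real.rpow_nonneg (by linarith [hs.2]) _), mul_comm]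
        exact mul_le_mul_of_nonneg_right h1 (Real.rpow_nonneg (by linarith [hs.2]) _)
      rw [intervalIntegral.integral_const_mul, integral_sub_rpow t (by linarith),
        sub_add_cancel] at hb
      rw [rlInt, norm_mul, norm_mul, Real.norm_of_nonneg (inv_nonneg.2 ht.1.le), Real.norm_eq_abs]
      calc t⁻¹ * (|1 / Real.Gamma σ| * ‖∫ s in (0:ℝ)..t, (t - s) ^ (σ - 1) * v s‖)
          ≤ t⁻¹ * (|1 / Real.Gamma σ| * (t * (t ^ σ / σ))) := by
            have := ht.1
            gcongr
        _ = |1 / Real.Gamma σ| * (t ^ σ / σ) := by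
            have := ht.1.ne'
            field_simp
    · have h : Tendsto (fun t : ℝ => |1 / Real.Gamma σ| * (t ^ σ / σ)) (nhds 0) (nhds 0) := by
        have hc : ContinuousAt (fun t : ℝ => |1 / Real.Gamma σ| * (t ^ σ / σ)) 0 :=
          ((Real.continuousAt_rpow_const 0 σ (Or.inr hσ.le)).div_const σ).const_mul _
        have := hc.tendsto
        simpa [Real.zero_rpow hσ.ne'] using this
      exact h.mono_left nhdsWithin_le_nhds
  exact tendsto_nhds_unique hslope hzero

/-- Testing the Caputo derivative against `(T - t)^(μ+2)`: all boundary terms vanish, and the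
adjoint of the Caputo derivative maps this power to a multiple of `(T - t)^(μ+2-α)`. -/
lemma integral_rpow_mul_caputoD {α μ T : ℝ} {w : ℝ → ℝ} (hα2 : α < 2) (hμ : 0 ≤ μ)
    (hT : 0 < T) (hw : ContDiff ℝ 1 w) (hac : AC2On (capKernel α w) T) :
    ∫ t in (0:ℝ)..T, (T - t) ^ (μ + 2) * caputoD α w t
      = Real.Gamma (μ + 3) / Real.Gamma (μ + 3 - α) *
        ∫ s in (0:ℝ)..T, (T - s) ^ (μ + 2 - α) * (w s - deriv w 0 * s - w 0) := by
  have hg : capKernel α w = rlInt (2 - α) (fun s => w s - deriv w 0 * s - w 0) := by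
    rw [capKernel, if_neg hα2.ne]
  unfold caputoD
  obtain ⟨hd, hi, he⟩ := hac
  have hwd : Differentiable ℝ w := hw.differentiable one_ne_zero
  have hd0 : deriv (capKernel α w) 0 = 0 := by
    have h0 := hd 0 ⟨le_rfl, hT.le⟩
    rw [hg] at h0 ⊢
    refine deriv_rlInt_zero (by linarith) ?_ (by simp) h0
    have := (((hwd 0).hasDerivAt.sub ((hasDerivAt_id (0:ℝ)).const_mul (deriv w 0))).sub_const (w 0))
    simpa using this
  have hv : IntervalIntegrable (fun s => w s - deriv w 0 * s - w 0) volume 0 T := by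
    have := hw.continuous
    exact Continuous.intervalIntegrable (by fun_prop) _ _
  set g := capKernel α w with hgdef
  have hg0 : g 0 = 0 := by rw [hg]; simp [rlInt]
  have hg1 : ∀ t ∈ Set.Icc (0:ℝ) T, deriv g t = rlInt 1 (deriv (deriv g)) t := by
    intro t ht
    rw [he t ht, hd0, zero_add, rlInt_one]
  have hg1c : ContinuousOn (deriv g) (Set.uIcc 0 T) := by
    refine (intervalIntegral.continuousOn_primitive_interval' hi Set.left_mem_uIcc).congr ?_
    intro t ht
    rw [Set.uIcc_of_le hT.le] at ht
    rw [hg1 t ht, rlInt_one]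
  have hg1i : IntervalIntegrable (deriv g) volume 0 T := hg1c.intervalIntegrable
  have hg2 : ∀ t ∈ Set.Icc (0:ℝ) T, g t = rlInt 1 (deriv g) t := by
    intro t ht
    rw [rlInt_one, intervalIntegral.integral_eq_sub_of_hasDerivAt (f := g), hg0, sub_zero]
    · intro x hx
      rw [Set.uIcc_of_le ht.1] at hx
      exact (hd x ⟨hx.1, hx.2.trans ht.2⟩).hasDerivAt
    · refine hg1i.mono_set ?_
      rw [Set.uIcc_of_le ht.1, Set.uIcc_of_le hT.le]
      exact Set.Icc_subset_Icc_right ht.2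
  have e1 := (integral_rpow_mul_rlInt (σ := 2 - α) (by linarith) hμ hT hv).2
  have e2 := (integral_rpow_mul_rlInt (σ := 1) one_pos hμ hT hg1i).2
  have e3 := (integral_rpow_mul_rlInt (σ := 1) (μ := μ + 1) one_pos (by linarith) hT hi).2
  have c2 : ∫ t in (0:ℝ)..T, (T - t) ^ μ * rlInt 1 (deriv g) t
      = ∫ t in (0:ℝ)..T, (T - t) ^ μ * g t := by
    refine intervalIntegral.integral_congr fun t ht => ?_
    rw [Set.uIcc_of_le hT.le] at ht
    simp only [hg2 t ht]
  have c3 : ∫ t in (0:ℝ)..T, (T - t) ^ (μ + 1) * rlInt 1 (deriv (deriv g)) t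
      = ∫ t in (0:ℝ)..T, (T - t) ^ (μ + 1) * deriv g t := by
    refine intervalIntegral.integral_congr fun t ht => ?_
    rw [Set.uIcc_of_le hT.le] at ht
    simp only [hg1 t ht]
  rw [← hg, ← c2, e2, ← c3, e3] at e1
  rw [show μ + 1 + 1 = μ + 2 by ring, show μ + 2 + 1 = μ + 3 by ring,
    show μ + (2 - α) + 1 = μ + 3 - α by ring, show μ + (2 - α) = μ + 2 - α by ring] at e1
  have p1 : Real.Gamma (μ + 1) ≠ 0 := (Real.Gamma_pos_of_pos (by linarith)).ne'
  have p2 : Real.Gamma (μ + 2) ≠ 0 := (Real.Gamma_pos_of_pos (by linarith)).ne'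
  have p3 : Real.Gamma (μ + 3) ≠ 0 := (Real.Gamma_pos_of_pos (by linarith)).ne'
  have p4 : Real.Gamma (μ + 3 - α) ≠ 0 := (Real.Gamma_pos_of_pos (by linarith)).ne'
  generalize (∫ s in (0:ℝ)..T, (T - s) ^ (μ + 2 - α) * (w s - deriv w 0 * s - w 0)) = V at e1 ⊢
  field_simp at e1 ⊢
  linarith

/-! ### Young's inequality and the test function -/

/-- Young's inequality with a small constant in front of the `p`-th power. -/
lemma exists_young {p ε : ℝ} (hp : 1 < p) (hε : 0 < ε) :
    ∃ K > (0:ℝ), ∀ x y : ℝ, 0 ≤ x → 0 ≤ y → x * y ≤ ε * x ^ p + K * y ^ (p / (p - 1)) := by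
  have hpq := Real.HolderConjugate.conjExponent hp
  have hp0 : 0 < p := by linarith
  set c : ℝ := (p * ε) ^ (1 / p) with hc
  have hc0 : 0 < c := by positivity
  have hcp : c ^ p = p * ε := by
    rw [hc, ← Real.rpow_mul (by positivity), one_div_mul_cancel hp0.ne', Real.rpow_one]
  have hq : Real.conjExponent p = p / (p - 1) := rfl
  have hq0 : 0 < p / (p - 1) := div_pos hp0 (by linarith)
  rw [hq] at hpq
  refine ⟨(c⁻¹) ^ (p / (p - 1)) / (p / (p - 1)), by positivity, fun x y hx hy => ?_⟩
  have := Real.young_inequality_of_nonneg (a := c * x) (b := c⁻¹ * y) (by positivity)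
    (by positivity) hpq
  rw [Real.mul_rpow hc0.le hx, Real.mul_rpow (by positivity) hy, hcp] at this
  calc x * y = c * x * (c⁻¹ * y) := by field_simp
    _ ≤ _ := this
    _ = _ := by field_simp

/-- The weighted integral `∫₀ᵀ (T - s)^q F(s) ds`. -/
noncomputable def wInt (T q : ℝ) (F : ℝ → ℝ) : ℝ := ∫ s in (0:ℝ)..T, (T - s) ^ q * F s

/-- The factor `Γ(x+1)/Γ(x+y+1)` by which fractional integration of order `y` (for `y < 0`:
differentiation of order `-y`) acts on the power `(T - t)^x`. -/
noncomputable def gammaRatio (x y : ℝ) : ℝ := Real.Gamma (x + 1) / Real.Gamma (x + y + 1)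

lemma gammaRatio_pos {x y : ℝ} (hx : 0 < x + 1) (hxy : 0 < x + y + 1) : 0 < gammaRatio x y :=
  div_pos (Real.Gamma_pos_of_pos hx) (Real.Gamma_pos_of_pos hxy)

lemma gammaRatio_succ {x y : ℝ} (hx : 0 < x + 1) (hxy : 0 < x + y + 1) :
    gammaRatio (x + 1) y = gammaRatio x y * ((x + 1) / (x + y + 1)) := by
  unfold gammaRatio
  rw [Real.Gamma_add_one hx.ne', show x + 1 + y + 1 = (x + y + 1) + 1 by ring,
    Real.Gamma_add_one hxy.ne']
  have := (Real.Gamma_pos_of_pos hxy).ne'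
  field_simp

lemma intervalIntegrable_sub_rpow_mul {T q : ℝ} {F : ℝ → ℝ} (hq : 0 ≤ q)
    (hF : IntervalIntegrable F volume 0 T) :
    IntervalIntegrable (fun s => (T - s) ^ q * F s) volume 0 T := by
  refine hF.continuousOn_mul (Continuous.continuousOn ?_)
  exact (continuous_const.sub continuous_id).rpow_const fun _ => Or.inr hq

lemma wInt_one {T q : ℝ} (hq : -1 < q) : wInt T q (fun _ => 1) = T ^ (q + 1) / (q + 1) := by
  simp [wInt, integral_sub_rpow T hq]

/-- The first-order Taylor polynomial of `w` contributes an explicit power of `T`. -/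
lemma wInt_taylor {T q w0 w1 : ℝ} {w : ℝ → ℝ} (hT : 0 < T) (hq : 0 ≤ q) (hw : Continuous w) :
    wInt T q (fun s => w s - w1 * s - w0)
      = wInt T q w - T ^ (q + 1) / (q + 1) * (w0 + T * w1 / (q + 2)) := by
  have i0 := intervalIntegrable_sub_rpow T (q := q) (by linarith)
  have i1 := intervalIntegrable_sub_rpow T (q := q + 1) (by linarith)
  have iw := intervalIntegrable_sub_rpow_mul (T := T) hq (hw.intervalIntegrable 0 T)
  have key : wInt T q (fun s => w s - w1 * s - w0)
      = ∫ s in (0:ℝ)..T, ((T - s) ^ q * w s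
          - ((w0 + w1 * T) * (T - s) ^ q - w1 * (T - s) ^ (q + 1))) := by
    refine intervalIntegral.integral_congr fun s hs => ?_
    rw [Set.uIcc_of_le hT.le] at hs
    have : (T - s) ^ (q + 1) = (T - s) ^ q * (T - s) :=
      Real.rpow_add_one' (by linarith [hs.2]) (by linarith)
    simp only [this]
    ring
  rw [key, intervalIntegral.integral_sub iw ((i0.const_mul _).sub (i1.const_mul _)),
    intervalIntegral.integral_sub (i0.const_mul _) (i1.const_mul _),
    intervalIntegral.integral_const_mul, intervalIntegral.integral_const_mul,
    integral_sub_rpow T (by linarith), integral_sub_rpow T (by linarith), wInt,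
    show q + 1 + 1 = (q + 1) + 1 by ring, Real.rpow_add_one hT.ne' (q + 1)]
  have : q + 1 ≠ 0 := by linarith
  have : q + 2 ≠ 0 := by linarith
  have : q + 1 + 1 ≠ 0 := by linarith
  field_simp
  ring

/-- The differential inequality tested against
`φ(t) = (T - t)^l - (θ/T) (T - t)^(l+1) ≥ 0`. -/
lemma tested_inequality {γ α p a b l θ T : ℝ} {w : ℝ → ℝ} (hγ : 0 < γ) (hα2 : α < 2)
    (hp : 1 < p) (hl : 2 ≤ l) (hθ0 : 0 ≤ θ) (hθ1 : θ ≤ 1) (hT : 0 < T)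
    (hw : ContDiff ℝ 1 w) (hac : AC2On (capKernel α w) T)
    (hineq : ∀ᵐ t ∂(volume.restrict (Set.Icc (0:ℝ) T)),
        caputoD α w t + a * w t ≥ b * rlInt γ (fun s => |w s| ^ p) t) :
    b * (gammaRatio l γ * wInt T (l + γ) (fun s => |w s| ^ p)
        - θ / T * (gammaRatio (l + 1) γ * wInt T (l + 1 + γ) (fun s => |w s| ^ p)))
      ≤ gammaRatio l (-α) * wInt T (l - α) (fun s => w s - deriv w 0 * s - w 0)
        - θ / T * (gammaRatio (l + 1) (-α) *
            wInt T (l + 1 - α) (fun s => w s - deriv w 0 * s - w 0))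
        + a * (wInt T l w - θ / T * wInt T (l + 1) w) := by
  have hwp : IntervalIntegrable (fun s => |w s| ^ p) volume 0 T := by
    refine Continuous.intervalIntegrable ?_ _ _
    exact hw.continuous.abs.rpow_const fun _ => Or.inr (by linarith)
  have cap : ∀ q, 2 ≤ q → wInt T q (caputoD α w) = gammaRatio q (-α) *
      wInt T (q - α) (fun s => w s - deriv w 0 * s - w 0) := by
    intro q hq
    have := integral_rpow_mul_caputoD (μ := q - 2) hα2 (by linarith) hT hw hac
    rw [show q - 2 + 2 = q by ring, show q - 2 + 3 = q + 1 by ring] at this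
    rw [wInt, this, wInt, gammaRatio, show q + -α + 1 = q + 1 - α by ring]
  obtain ⟨ir0, er0⟩ := integral_rpow_mul_rlInt (μ := l) hγ (by linarith) hT hwp
  obtain ⟨ir1, er1⟩ := integral_rpow_mul_rlInt (μ := l + 1) hγ (by linarith) hT hwp
  have ic0 := intervalIntegrable_sub_rpow_mul (T := T) (q := l) (by linarith) hac.2.1
  have ic1 := intervalIntegrable_sub_rpow_mul (T := T) (q := l + 1) (by linarith) hac.2.1
  have iw0 := intervalIntegrable_sub_rpow_mul (T := T) (q := l) (by linarith)
    (hw.continuous.intervalIntegrable 0 T)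
  have iw1 := intervalIntegrable_sub_rpow_mul (T := T) (q := l + 1) (by linarith)
    (hw.continuous.intervalIntegrable 0 T)
  rw [← cap l hl, ← cap (l + 1) (by linarith)]
  unfold wInt gammaRatio
  rw [← er0, ← er1]
  change _ ≤ (∫ s in (0:ℝ)..T, (T - s) ^ l * deriv (deriv (capKernel α w)) s)
    - θ / T * (∫ s in (0:ℝ)..T, (T - s) ^ (l + 1) * deriv (deriv (capKernel α w)) s) + _
  rw [← intervalIntegral.integral_const_mul (θ / T), ← intervalIntegral.integral_const_mul (θ / T),
    ← intervalIntegral.integral_const_mul (θ / T),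
    ← intervalIntegral.integral_sub ir0 (ir1.const_mul _),
    ← intervalIntegral.integral_sub ic0 (ic1.const_mul _),
    ← intervalIntegral.integral_sub iw0 (iw1.const_mul _),
    ← intervalIntegral.integral_const_mul b, ← intervalIntegral.integral_const_mul a,
    ← intervalIntegral.integral_add (ic0.sub (ic1.const_mul _))
      ((iw0.sub (iw1.const_mul _)).const_mul _)]
  refine intervalIntegral.integral_mono_ae_restrict hT.le ((ir0.sub (ir1.const_mul _)).const_mul _)
    ((ic0.sub (ic1.const_mul _)).add ((iw0.sub (iw1.const_mul _)).const_mul _)) ?_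
  filter_upwards [hineq, ae_restrict_mem measurableSet_Icc] with t ht htm
  have hx : 0 ≤ T - t := by linarith [htm.2]
  have hpow : (T - t) ^ (l + 1) = (T - t) ^ l * (T - t) :=
    Real.rpow_add_one' hx (by linarith)
  have hφ : 0 ≤ (T - t) ^ l * (1 - θ / T * (T - t)) := by
    refine mul_nonneg (Real.rpow_nonneg hx _) (sub_nonneg.2 ?_)
    rw [div_mul_eq_mul_div, div_le_one hT]
    nlinarith [htm.1]
  have := mul_le_mul_of_nonneg_left ht hφ
  simp only [hpow]
  unfold caputoD at this
  linarith

/-- The pointwise estimate: Young's inequality absorbs the terms linear in `w` into `|w|^p`. -/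
lemma young_pointwise {γ α p a b l C0 C1 D0 D1 : ℝ} (hp : 1 < p) (ha : 0 < a) (hb : 0 < b)
    (hC0 : 0 < C0) (hC1 : 0 < C1) (hD1 : 0 < D1) (hD : D1 < D0) :
    ∃ K' > (0:ℝ), ∃ K'' > (0:ℝ), ∀ r x y : ℝ, 0 ≤ r → r ≤ 1 → 0 < x →
      x ^ (l - α) * (y * (C0 - r * C1)) + a * (x ^ l * (y * (1 - r)))
        ≤ b * (x ^ (l + γ) * (|y| ^ p * (D0 - r * D1)))
          + (K' * x ^ (l - (α * p + γ) / (p - 1)) + K'' * x ^ (l - γ / (p - 1))) := by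
  obtain ⟨K, hK, hY⟩ := exists_young (p := p) (ε := b * (D0 - D1) / 2) hp
    (by have : 0 < D0 - D1 := by linarith
        positivity)
  refine ⟨K * (C0 + C1) ^ (p / (p - 1)), by positivity, K * a ^ (p / (p - 1)), by positivity,
    fun r x y hr0 hr1 hx => ?_⟩
  have hp1 : p - 1 ≠ 0 := by linarith
  have y1 := hY |y| ((C0 + C1) * x ^ (-(α + γ))) (abs_nonneg _) (by positivity)
  have y2 := hY |y| (a * x ^ (-γ)) (abs_nonneg _) (by positivity)
  rw [Real.mul_rpow (by positivity) (by positivity), ← Real.rpow_mul hx.le] at y1 y2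
  have m1 := mul_le_mul_of_nonneg_left y1 (Real.rpow_nonneg hx.le (l + γ))
  have m2 := mul_le_mul_of_nonneg_left y2 (Real.rpow_nonneg hx.le (l + γ))
  have e1 : x ^ (l - α) = x ^ (l + γ) * x ^ (-(α + γ)) := by
    rw [← Real.rpow_add hx]; congr 1; ring
  have e2 : x ^ l = x ^ (l + γ) * x ^ (-γ) := by
    rw [← Real.rpow_add hx]; congr 1; ring
  have e3 : x ^ (l - (α * p + γ) / (p - 1)) = x ^ (l + γ) * x ^ (-(α + γ) * (p / (p - 1))) := by
    rw [← Real.rpow_add hx]; congr 1; field_simp; ring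
  have e4 : x ^ (l - γ / (p - 1)) = x ^ (l + γ) * x ^ (-γ * (p / (p - 1))) := by
    rw [← Real.rpow_add hx]; congr 1; field_simp; ring
  have b1 : y * (C0 - r * C1) ≤ |y| * (C0 + C1) := by
    refine (le_abs_self _).trans ?_
    rw [abs_mul]
    refine mul_le_mul_of_nonneg_left (abs_le.2 ⟨?_, ?_⟩) (abs_nonneg y) <;> nlinarith
  have b2 : y * (1 - r) ≤ |y| := by
    refine (le_abs_self _).trans ?_
    rw [abs_mul, abs_of_nonneg (by linarith : 0 ≤ 1 - r)]
    exact mul_le_of_le_one_right (abs_nonneg y) (by linarith)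
  have b3 : |y| ^ p * (D0 - D1) ≤ |y| ^ p * (D0 - r * D1) := by
    refine mul_le_mul_of_nonneg_left ?_ (by positivity)
    nlinarith
  have n1 := mul_le_mul_of_nonneg_left b1 (Real.rpow_nonneg hx.le (l - α))
  have n2 := mul_le_mul_of_nonneg_left (mul_le_mul_of_nonneg_left b2 (Real.rpow_nonneg hx.le l)) ha.le
  have n3 := mul_le_mul_of_nonneg_left (mul_le_mul_of_nonneg_left b3
    (Real.rpow_nonneg hx.le (l + γ))) hb.le
  rw [e3, e4]
  refine (add_le_add n1 n2).trans (le_trans ?_ (add_le_add_left n3 _))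
  rw [e1, e2]
  linarith

/-- The pointwise estimate of `young_pointwise` integrated against the test function. -/
lemma young_integrated {γ α p a b l θ T C0 C1 D0 D1 K' K'' : ℝ} {w : ℝ → ℝ} (hγ : 0 < γ)
    (hp : 1 < p) (hl : 0 ≤ l) (hlα : 0 ≤ l - α) (hlβ : 0 ≤ l - (α * p + γ) / (p - 1))
    (hlβ' : 0 ≤ l - γ / (p - 1)) (hθ0 : 0 ≤ θ) (hθ1 : θ ≤ 1) (hT : 0 < T) (hw : Continuous w)
    (hY : ∀ r x y : ℝ, 0 ≤ r → r ≤ 1 → 0 < x →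
      x ^ (l - α) * (y * (C0 - r * C1)) + a * (x ^ l * (y * (1 - r)))
        ≤ b * (x ^ (l + γ) * (|y| ^ p * (D0 - r * D1)))
          + (K' * x ^ (l - (α * p + γ) / (p - 1)) + K'' * x ^ (l - γ / (p - 1)))) :
    C0 * wInt T (l - α) w - θ / T * (C1 * wInt T (l + 1 - α) w)
        + a * (wInt T l w - θ / T * wInt T (l + 1) w)
      ≤ b * (D0 * wInt T (l + γ) (fun s => |w s| ^ p)
          - θ / T * (D1 * wInt T (l + 1 + γ) (fun s => |w s| ^ p)))
        + (K' * wInt T (l - (α * p + γ) / (p - 1)) (fun _ => 1)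
          + K'' * wInt T (l - γ / (p - 1)) (fun _ => 1)) := by
  have hwi := hw.intervalIntegrable (μ := volume) 0 T
  have hwp : IntervalIntegrable (fun s => |w s| ^ p) volume 0 T :=
    (hw.abs.rpow_const fun _ => Or.inr (by linarith)).intervalIntegrable _ _
  have h1i : IntervalIntegrable (fun _ => (1:ℝ)) volume 0 T := intervalIntegrable_const
  have i1 := (intervalIntegrable_sub_rpow_mul (T := T) hlα hwi).const_mul C0
  have i2 := ((intervalIntegrable_sub_rpow_mul (T := T) (q := l + 1 - α) (by linarith) hwi).const_mul
    C1).const_mul (θ / T)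
  have i3 := intervalIntegrable_sub_rpow_mul (T := T) hl hwi
  have i4 := (intervalIntegrable_sub_rpow_mul (T := T) (q := l + 1) (by linarith) hwi).const_mul
    (θ / T)
  have i5 := (intervalIntegrable_sub_rpow_mul (T := T) (q := l + γ) (by linarith) hwp).const_mul D0
  have i6 := ((intervalIntegrable_sub_rpow_mul (T := T) (q := l + 1 + γ) (by linarith)
    hwp).const_mul D1).const_mul (θ / T)
  have i7 := (intervalIntegrable_sub_rpow_mul (T := T) hlβ h1i).const_mul K'
  have i8 := (intervalIntegrable_sub_rpow_mul (T := T) hlβ' h1i).const_mul K''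
  have i34 := (i3.sub i4).const_mul a
  have i56 := (i5.sub i6).const_mul b
  simp only [wInt, ← intervalIntegral.integral_const_mul]
  rw [← intervalIntegral.integral_sub i1 i2, ← intervalIntegral.integral_sub i3 i4,
    ← intervalIntegral.integral_sub i5 i6, ← intervalIntegral.integral_const_mul a,
    ← intervalIntegral.integral_const_mul b, ← intervalIntegral.integral_add (i1.sub i2) i34,
    ← intervalIntegral.integral_add i7 i8, ← intervalIntegral.integral_add i56 (i7.add i8)]
  refine intervalIntegral.integral_mono_on_of_le_Ioo hT.le ((i1.sub i2).add i34)
    (i56.add (i7.add i8)) fun s hs => ?_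
  have hx : 0 < T - s := by linarith [hs.2]
  have e1 : (T - s) ^ (l + 1 - α) = (T - s) ^ (l - α) * (T - s) := by
    rw [← Real.rpow_add_one hx.ne']; congr 1; ring
  have e2 : (T - s) ^ (l + 1) = (T - s) ^ l * (T - s) := Real.rpow_add_one hx.ne' _
  have e3 : (T - s) ^ (l + 1 + γ) = (T - s) ^ (l + γ) * (T - s) := by
    rw [← Real.rpow_add_one hx.ne']; congr 1; ring
  have := hY (θ / T * (T - s)) (T - s) (w s) (by positivity)
    (by rw [div_mul_eq_mul_div, div_le_one hT]; nlinarith [hs.1]) hx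
  rw [e1, e2, e3]
  linarith

/-- Corollary 2.5 (i): a priori bound for solutions of the inequality
`₀D_t^α w + a w ≥ b ₀I_t^γ |w|^p`, with `K₁, K₂` independent of `T`. -/
theorem apriori_bound_ineq
    (γ α p a b : ℝ) (hγ : 0 < γ) (hα1 : 1 < α) (hα2 : α < 2)
    (hp : 1 < p) (ha : 0 < a) (hb : 0 < b) :
    ∃ K₁ > (0:ℝ), ∃ K₂ > (0:ℝ), ∀ T > (0:ℝ), ∀ w : ℝ → ℝ,
      ContDiff ℝ 1 w →
      (∃ t ∈ Set.Icc (0:ℝ) T, w t ≠ 0) →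
      AC2On (capKernel α w) T →
      (∀ᵐ t ∂(volume.restrict (Set.Icc (0:ℝ) T)),
        caputoD α w t + a * w t ≥ b * rlInt γ (fun s => |w s| ^ p) t) →
      T * deriv w 0 + w 0
        ≤ K₁ * T ^ (α + γ - p * γ / (p - 1)) + K₂ * T ^ (-(α + γ) / (p - 1)) := by
  have hp1 : 0 < p - 1 := by linarith
  have hα : 0 < α := by linarith
  set β := (α * p + γ) / (p - 1) with hβ
  set β' := γ / (p - 1) with hβ'
  have hβ'0 : 0 < β' := by positivity
  have hββ' : β' + α < β := by
    rw [hβ, hβ', ← sub_pos]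
    have : (α * p + γ) / (p - 1) - (γ / (p - 1) + α) = α / (p - 1) := by field_simp; ring
    rw [this]; positivity
  -- the exponent `l` is large enough for all powers of `T - s` below to be nonnegative
  set l := 3 + β with hl
  set m := l - α + 1 with hm
  have hm0 : 0 < m := by linarith
  set C0 := gammaRatio l (-α) with hC0
  have hC0p : 0 < C0 := gammaRatio_pos (by linarith) (by linarith)
  have hC1 : gammaRatio (l + 1) (-α) = C0 * ((m + α) / m) := by
    rw [gammaRatio_succ (by linarith) (by linarith), hm]
    congr 2 <;> ring
  have hC1p : 0 < gammaRatio (l + 1) (-α) := gammaRatio_pos (by linarith) (by linarith)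
  have hD0p : 0 < gammaRatio l γ := gammaRatio_pos (by linarith) (by linarith)
  have hD1p : 0 < gammaRatio (l + 1) γ := gammaRatio_pos (by linarith) (by linarith)
  have hD : gammaRatio (l + 1) γ < gammaRatio l γ := by
    rw [gammaRatio_succ (by linarith) (by linarith)]
    refine mul_lt_of_lt_one_right hD0p ((div_lt_one (by linarith)).2 (by linarith))
  -- this `θ` gives `w 0` and `T * deriv w 0` equal coefficients in the tested inequality
  set θ := m * (m + 2) / ((m + 1) * (m + α)) with hθ
  have hθ0 : 0 ≤ θ := by positivity
  have hθ1 : θ ≤ 1 := by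
    rw [hθ, div_le_one (by positivity)]
    nlinarith
  obtain ⟨K', hK', K'', hK'', hY⟩ := young_pointwise (γ := γ) (α := α) (l := l) hp ha hb hC0p hC1p
    hD1p hD
  set E := C0 / (m * (m + 1) ^ 2) with hE
  have hEp : 0 < E := by positivity
  have hl1 : 0 < l - β + 1 := by linarith
  have hl2 : 0 < l - β' + 1 := by linarith
  refine ⟨K'' / ((l - β' + 1) * E), by positivity, K' / ((l - β + 1) * E), by positivity,
    fun T hT w hw _ hac hineq => ?_⟩
  have h1 := tested_inequality hγ hα2 hp (l := l) (by linarith) hθ0 hθ1 hT hw hac hineq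
  have h2 := young_integrated hγ hp (by linarith) (by linarith) (by linarith) (by linarith)
    hθ0 hθ1 hT hw.continuous hY
  rw [wInt_taylor hT (by linarith) hw.continuous, wInt_taylor hT (by linarith) hw.continuous] at h1
  rw [← hβ, ← hβ', wInt_one (by linarith), wInt_one (by linarith)] at h2
  have key : C0 * (T ^ (l - α + 1) / (l - α + 1) * (w 0 + T * deriv w 0 / (l - α + 2)))
      - θ / T * (gammaRatio (l + 1) (-α) *
        (T ^ (l + 1 - α + 1) / (l + 1 - α + 1) * (w 0 + T * deriv w 0 / (l + 1 - α + 2))))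
      = E * T ^ m * (T * deriv w 0 + w 0) := by
    rw [hC1, show l + 1 - α + 1 = m + 1 by rw [hm]; ring, ← hm,
      show l - α + 2 = m + 1 by rw [hm]; ring, show l + 1 - α + 2 = m + 2 by rw [hm]; ring,
      Real.rpow_add_one hT.ne' m, hθ, hE]
    clear_value m C0
    field_simp
    ring
  have t1 : T ^ (l - β + 1) = T ^ m * T ^ (-(α + γ) / (p - 1)) := by
    rw [← Real.rpow_add hT]
    congr 1
    rw [hm, hβ]; field_simp; ring
  have t2 : T ^ (l - β' + 1) = T ^ m * T ^ (α + γ - p * γ / (p - 1)) := by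
    rw [← Real.rpow_add hT]
    congr 1
    rw [hm, hβ']; field_simp; ring
  have h3 : E * T ^ m * (T * deriv w 0 + w 0)
      ≤ K' * (T ^ (l - β + 1) / (l - β + 1)) + K'' * (T ^ (l - β' + 1) / (l - β' + 1)) := by
    linarith
  rw [t1, t2] at h3
  have hET : 0 < E * T ^ m := by positivity
  refine le_of_mul_le_mul_left (h3.trans_eq ?_) hET
  clear_value E l β β' m
  field_simp
  ring
end
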